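/- Assume (H5.1), (H5.2), (H5.3), (H5.4) and ψ₁, ψ₂ ≥ α > 0, with γ convex. Then there exist C > 0 and ε₀ ∈ (0,1] such that for every ε ∈ (0,ε₀) and every pair (u₁^ε, u₂^ε) ∈ (C²(U) ∩ C¹(Ū))² solving the penalized obstacle-type system, setting θ_j^ε := u_j^ε − u_{3−j}^ε − ψ_j, one has max_{j=1,2} max_{x ∈ Ū} θ_j^ε(x)/ε ≤ C and max_{j=1,2} max_{x ∈ Ū} γ^ε(θ_j^ε(x)) ≤ C. -/

import Mathlib

open Set Filter

noncomputable def lap {n : ℕ} (u : EuclideanSpace ℝ (Fin n) → ℝ) (x : EuclideanSpace ℝ (Fin n)) : ℝ :=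
  ∑ i : Fin n, fderiv ℝ (fun y => fderiv ℝ u y (EuclideanSpace.single i 1)) x
    (EuclideanSpace.single i 1)

namespace S18
open Topology

abbrev EE (n : ℕ) := EuclideanSpace ℝ (Fin n)

theorem second_le {h h' : ℝ → ℝ} {m : ℝ} (hmax : IsLocalMax h 0)
    (hd : ∀ᶠ t in 𝓝 (0:ℝ), HasDerivAt h (h' t) t) (hd2 : HasDerivAt h' m 0) : m ≤ 0 := by
  by_contra hm
  push Not at hm
  have h1 : deriv h =ᶠ[𝓝 0] h' := by
    filter_upwards [hd] with t ht using ht.deriv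
  have h2 : deriv (deriv h) 0 = m := by
    rw [h1.deriv_eq, hd2.deriv]
  have h0 : deriv h 0 = 0 := hmax.deriv_eq_zero
  have hc : ContinuousAt h 0 := (hd.self_of_nhds).continuousAt
  have hmin : IsLocalMin h 0 := isLocalMin_of_deriv_deriv_pos (by rw [h2]; exact hm) h0 hc
  have hcst : h =ᶠ[𝓝 0] fun _ => h 0 := by
    filter_upwards [hmax, hmin] with t h1 h2 using le_antisymm h1 h2
  have h3 : deriv h =ᶠ[𝓝 0] fun _ => 0 := by
    have := hcst.deriv
    filter_upwards [this] with t ht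
    rw [ht]; simp
  have h4 : deriv (deriv h) 0 = 0 := by
    rw [h3.deriv_eq]; simp
  linarith

variable {n : ℕ}

noncomputable def B2 (u : EE n → ℝ) (x : EE n) : EE n →L[ℝ] EE n →L[ℝ] ℝ := fderiv ℝ (fderiv ℝ u) x

theorem hasDeriv_line {u : EE n → ℝ} {U : Set (EE n)} (hU : IsOpen U) (hu : ContDiffOn ℝ 2 u U)
    {x : EE n} (hx : x ∈ U) (ξ : EE n) :
    (∀ᶠ t in 𝓝 (0:ℝ), HasDerivAt (fun t : ℝ => u (x + t • ξ)) (fderiv ℝ u (x + t • ξ) ξ) t) ∧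
    HasDerivAt (fun t : ℝ => fderiv ℝ u (x + t • ξ) ξ) (B2 u x ξ ξ) 0 := by
  have hline : ∀ t : ℝ, HasDerivAt (fun t : ℝ => x + t • ξ) ξ t := by
    intro t
    simpa using ((hasDerivAt_id t).smul_const ξ).const_add x
  have hcont : Continuous (fun t : ℝ => x + t • ξ) := by fun_prop
  have hev : ∀ᶠ t in 𝓝 (0:ℝ), x + t • ξ ∈ U := by
    apply hcont.continuousAt
    simpa using hU.mem_nhds hx
  constructor
  · filter_upwards [hev] with t ht
    have hd : HasFDerivAt u (fderiv ℝ u (x + t • ξ)) (x + t • ξ) :=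
      ((hu.differentiableOn (by norm_num)).differentiableAt (hU.mem_nhds ht)).hasFDerivAt
    exact hd.comp_hasDerivAt t (hline t)
  · have h1 : ContDiffOn ℝ 1 (fderiv ℝ u) U := hu.fderiv_of_isOpen hU (by norm_num)
    have hd : HasFDerivAt (fderiv ℝ u) (B2 u x) (x + (0:ℝ) • ξ) := by
      have := ((h1.differentiableOn (by norm_num)).differentiableAt (hU.mem_nhds hx)).hasFDerivAt
      simpa [B2] using this
    have h2 := hd.comp_hasDerivAt (0:ℝ) (hline 0)
    have h3 := h2.clm_apply (hasDerivAt_const (0:ℝ) ξ)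
    simpa using h3

theorem lap_eq {u : EE n → ℝ} {U : Set (EE n)} (hU : IsOpen U) (hu : ContDiffOn ℝ 2 u U)
    {x : EE n} (hx : x ∈ U) :
    lap u x = ∑ i : Fin n, B2 u x (EuclideanSpace.single i 1) (EuclideanSpace.single i 1) := by
  unfold lap
  refine Finset.sum_congr rfl fun i _ => ?_
  have h1 : ContDiffOn ℝ 1 (fderiv ℝ u) U := hu.fderiv_of_isOpen hU (by norm_num)
  have hd : HasFDerivAt (fderiv ℝ u) (B2 u x) x :=
    ((h1.differentiableOn (by norm_num)).differentiableAt (hU.mem_nhds hx)).hasFDerivAt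
  have h3 := hd.clm_apply (hasFDerivAt_const (EuclideanSpace.single i (1:ℝ) : EE n) x)
  rw [h3.fderiv]
  simp

theorem second_two {u v : EE n → ℝ} {U : Set (EE n)} (hU : IsOpen U) (hu : ContDiffOn ℝ 2 u U)
    (hv : ContDiffOn ℝ 2 v U)
    {x y : EE n} (hx : x ∈ U) (hy : y ∈ U) (ξ ζ : EE n) (c c' : ℝ) {m m' : ℝ → ℝ} {m2 : ℝ}
    (hm : ∀ᶠ t in 𝓝 (0:ℝ), HasDerivAt m (m' t) t) (hm2 : HasDerivAt m' m2 0)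
    (hmax : IsLocalMax (fun t : ℝ => c * u (x + t • ξ) - c' * v (y + t • ζ) - m t) 0) :
    c * B2 u x ξ ξ - c' * B2 v y ζ ζ ≤ m2 := by
  obtain ⟨a1, a2⟩ := hasDeriv_line hU hu hx ξ
  obtain ⟨b1, b2⟩ := hasDeriv_line hU hv hy ζ
  have := second_le hmax (h' := fun t => c * fderiv ℝ u (x + t • ξ) ξ - c' * fderiv ℝ v (y + t • ζ) ζ - m' t)
    (m := c * B2 u x ξ ξ - c' * B2 v y ζ ζ - m2) ?_ ?_
  · linarith
  · filter_upwards [a1, b1, hm] with t h1 h2 h3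
    exact ((h1.const_mul c).sub (h2.const_mul c')).sub h3
  · exact ((a2.const_mul c).sub (b2.const_mul c')).sub hm2

/-- first order at local max against a quadratic -/
theorem grad_of_max {u : EE n → ℝ} {x p : EE n} {c k : ℝ} (hd : DifferentiableAt ℝ u x)
    (hmax : IsLocalMax (fun x' => c * u x' - (inner ℝ p (x' - x) + k / 2 * ‖x' - x‖^2)) x) :
    c • gradient u x = p := by
  have h1 : HasFDerivAt (fun x' => c * u x' - (inner ℝ p (x' - x) + k / 2 * ‖x' - x‖^2))
      (c • fderiv ℝ u x - innerSL ℝ p) x := by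
    have ha : HasFDerivAt (fun x' : EE n => x' - x) (ContinuousLinearMap.id ℝ (EE n)) x :=
      (hasFDerivAt_id x).sub_const x
    have hb : HasFDerivAt (fun x' : EE n => inner ℝ p (x' - x)) (innerSL ℝ p) x := by
      have := (innerSL ℝ p).hasFDerivAt.comp x ha
      simpa [Function.comp_def] using this
    have hc : HasFDerivAt (fun x' : EE n => ‖x' - x‖^2) (0 : EE n →L[ℝ] ℝ) x := by
      have := ha.norm_sq
      simpa using this
    have hdd := (hd.hasFDerivAt.const_mul c).sub (hb.add (hc.const_mul (k/2)))
    refine hdd.congr_fderiv ?_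
    simp
  have h2 := hmax.hasFDerivAt_eq_zero h1
  apply ext_inner_right ℝ
  intro v
  rw [inner_smul_left, inner_gradient_left]
  have := congrArg (fun L : EE n →L[ℝ] ℝ => L v) h2
  simp at this
  simp; linarith

theorem lap_of_max {u : EE n → ℝ} {U : Set (EE n)} (hU : IsOpen U) (hu : ContDiffOn ℝ 2 u U)
    {x p : EE n} (hx : x ∈ U) {c k : ℝ}
    (hmax : IsLocalMax (fun x' => c * u x' - (inner ℝ p (x' - x) + k / 2 * ‖x' - x‖^2)) x) :
    c * lap u x ≤ n * k := by
  rw [lap_eq hU hu hx, Finset.mul_sum]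
  have : ∀ i : Fin n, c * B2 u x (EuclideanSpace.single i 1) (EuclideanSpace.single i 1) ≤ k := by
    intro i
    have h := second_two hU hu hu hx hx (EuclideanSpace.single i (1:ℝ)) 0 c 0
      (m := fun t => inner ℝ p (EuclideanSpace.single i (1:ℝ) : EE n) * t + k / 2 * t^2)
      (m' := fun t => inner ℝ p (EuclideanSpace.single i (1:ℝ) : EE n) + k * t) (m2 := k) ?_ ?_ ?_
    · simpa using h
    · refine Eventually.of_forall fun t => ?_
      have h1 := ((hasDerivAt_id t).const_mul (inner ℝ p (EuclideanSpace.single i (1:ℝ) : EE n))).add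
        (((hasDerivAt_id t).pow 2).const_mul (k/2))
      refine h1.congr_deriv ?_
      simp; ring
    · have h1 := ((hasDerivAt_id (0:ℝ)).const_mul k).const_add (inner ℝ p (EuclideanSpace.single i (1:ℝ) : EE n))
      simpa using h1
    · have hc : ContinuousAt (fun t : ℝ => x + t • (EuclideanSpace.single i (1:ℝ) : EE n)) 0 := by fun_prop
      have ht : Tendsto (fun t : ℝ => x + t • (EuclideanSpace.single i (1:ℝ) : EE n)) (𝓝 0) (𝓝 x) := by
        simpa [ContinuousAt] using hc
      have := ht.eventually hmax
      filter_upwards [this] with t h1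
      simp [inner_smul_right, norm_smul] at h1 ⊢
      linarith
  calc _ ≤ ∑ i : Fin n, k := Finset.sum_le_sum fun i _ => this i
    _ = n * k := by simp

theorem continuousOn_deriv {u : EE n → ℝ} {U : Set (EE n)} (hU : IsOpen U) (hu : ContDiffOn ℝ 2 u U)
    {x : EE n} (hx : x ∈ U) : DifferentiableAt ℝ u x :=
  (hu.differentiableOn (by norm_num)).differentiableAt (hU.mem_nhds hx)

theorem continuousOn_lap {u : EE n → ℝ} {U : Set (EE n)} (hU : IsOpen U) (hu : ContDiffOn ℝ 2 u U) :
    ContinuousOn (lap u) U := by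
  have h1 : ContDiffOn ℝ 1 (fderiv ℝ u) U := hu.fderiv_of_isOpen hU (by norm_num)
  have h2 : ContinuousOn (B2 u) U := (h1.continuousOn_fderiv_of_isOpen hU (by norm_num))
  have : ContinuousOn (fun x => ∑ i : Fin n, B2 u x (EuclideanSpace.single i 1) (EuclideanSpace.single i 1)) U := by
    fun_prop
  exact this.congr fun x hx => lap_eq hU hu hx

/-- Reflection invariance of the trace. -/
theorem reflect_trace (B : EE n →L[ℝ] EE n →L[ℝ] ℝ) (z : EE n) (hz : ‖z‖ = 1) :
    ∑ i : Fin n, B (EuclideanSpace.single i 1 - (2 * z i) • z) (EuclideanSpace.single i 1 - (2 * z i) • z)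
     = ∑ i : Fin n, B (EuclideanSpace.single i 1) (EuclideanSpace.single i 1) := by
  have hz' : ∑ i : Fin n, z i ^ 2 = 1 := by
    have := EuclideanSpace.norm_sq_eq z
    rw [hz] at this
    simpa using this.symm
  have hsum : z = ∑ i : Fin n, z i • (EuclideanSpace.single i (1:ℝ) : EE n) := by
    ext j
    simp [Finset.sum_apply, Pi.single_apply]
  have h1 : ∑ i : Fin n, z i * B z (EuclideanSpace.single i 1) = B z z := by
    conv_rhs => rw [hsum]
    conv_rhs => enter [1]; rw [← hsum]
    simp [map_sum]
  have h2 : ∑ i : Fin n, z i * B (EuclideanSpace.single i 1) z = B z z := by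
    conv_rhs => rw [hsum]
    conv_rhs => enter [2]; rw [← hsum]
    simp [map_sum]
  have h3 : ∀ i : Fin n, B (EuclideanSpace.single i 1 - (2 * z i) • z) (EuclideanSpace.single i 1 - (2 * z i) • z)
     = B (EuclideanSpace.single i 1) (EuclideanSpace.single i 1) - 2 * (z i * B z (EuclideanSpace.single i 1))
        - 2 * (z i * B (EuclideanSpace.single i 1) z) + z i ^ 2 * (4 * B z z) := by
    intro i
    simp
    ring
  simp_rw [h3]
  rw [Finset.sum_add_distrib, Finset.sum_sub_distrib, Finset.sum_sub_distrib, ← Finset.mul_sum, ← Finset.mul_sum,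
    ← Finset.sum_mul, h1, h2, hz']
  ring

end S18

namespace S18
open Topology

structure Data {n : ℕ} (U : Set (EE n)) (H : Bool → EE n → EE n → ℝ) (ψ Φ : Bool → EE n → ℝ)
    (γ : ℝ → ℝ) (α Cb : ℝ) : Prop where
  hn : 2 ≤ n
  hU : IsOpen U
  bdd : Bornology.IsBounded U
  hH : ∀ j, ContDiff ℝ (⊤ : ℕ∞) (fun q : EE n × EE n => H j q.1 q.2)
  hψ : ∀ j, ContDiff ℝ (⊤ : ℕ∞) (ψ j)
  hα : 0 < α
  ψα : ∀ j, ∀ x ∈ closure U, α ≤ ψ j x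
  hγ : ContDiff ℝ (⊤ : ℕ∞) γ
  γconv : ConvexOn ℝ Set.univ γ
  γnn : ∀ s, 0 ≤ γ s
  γ0 : ∀ s ≤ (0:ℝ), γ s = 0
  γ' : ∀ s, 0 < s → 0 < deriv γ s ∧ deriv γ s ≤ 1
  γtop : Tendsto γ atTop atTop
  conv : ∀ j, ∀ x ∈ closure U, ConvexOn ℝ Set.univ (fun p : EE n => H j x p)
  suplin : ∀ j, ∀ M : ℝ, ∃ R : ℝ, ∀ x ∈ closure U, ∀ p : EE n, R ≤ ‖p‖ → M * ‖p‖ ≤ H j x p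
  dx : ∀ j, ∀ x ∈ closure U, ∀ p : EE n, ‖gradient (fun y => H j y p) x‖ ≤ Cb
  Φ2 : ∀ j, ContDiffOn ℝ 2 (Φ j) U
  Φc : ∀ j, ContinuousOn (Φ j) (closure U)
  Φg : ∀ j, ContinuousOn (gradient (Φ j)) (closure U)
  Φ0 : ∀ j, ∀ x ∈ frontier U, Φ j x = 0
  obst : ∀ j, ∀ x ∈ closure U, Φ j x - Φ (!j) x ≤ ψ j x
  sub : ∀ j, ∀ x ∈ closure U, Φ j x + H j x (gradient (Φ j) x) < 0

structure Sol {n : ℕ} (U : Set (EE n)) (H : Bool → EE n → EE n → ℝ) (ψ : Bool → EE n → ℝ)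
    (γ : ℝ → ℝ) (ε : ℝ) (u : Bool → EE n → ℝ) : Prop where
  c2 : ∀ j, ContDiffOn ℝ 2 (u j) U
  cont : ∀ j, ContinuousOn (u j) (closure U)
  grad : ∀ j, ContinuousOn (gradient (u j)) (closure U)
  pde : ∀ j, ∀ x ∈ U, u j x + H j x (gradient (u j) x) + γ ((u j x - u (!j) x - ψ j x) / ε)
    = ε * lap (u j) x
  bdry : ∀ j, ∀ x ∈ frontier U, u j x = 0

variable {n : ℕ}

theorem frontier_not_mem {U : Set (EE n)} (hU : IsOpen U) {x : EE n} (hx : x ∈ frontier U) : x ∉ U := by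
  rw [hU.frontier_eq] at hx; exact hx.2

theorem mem_frontier_of {U : Set (EE n)} (hU : IsOpen U) {x : EE n} (hx : x ∈ closure U) (h : x ∉ U) :
    x ∈ frontier U := by
  rw [hU.frontier_eq]; exact ⟨hx, h⟩

theorem exit_point {U : Set (EE n)} (hU : IsOpen U) {x y : EE n} (hx : x ∈ U) (hy : y ∉ U) :
    ∃ s ∈ Ioc (0:ℝ) 1, x + s • (y - x) ∈ frontier U ∧ ∀ t ∈ Ico (0:ℝ) s, x + t • (y - x) ∈ U := by
  have hc : Continuous (fun t : ℝ => x + t • (y - x)) := by fun_prop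
  have hcl : IsCompact (Icc (0:ℝ) 1 ∩ (fun t : ℝ => x + t • (y - x)) ⁻¹' Uᶜ) :=
    isCompact_Icc.inter_right (hU.isClosed_compl.preimage hc)
  obtain ⟨s, hs, hl⟩ := hcl.exists_isLeast ⟨1, by simp, by simpa using hy⟩
  have h0 : 0 < s := by
    rcases lt_or_eq_of_le hs.1.1 with h | h
    · exact h
    · exfalso; apply hs.2; rw [← h]; simpa using hx
  have hin : ∀ t ∈ Ico (0:ℝ) s, x + t • (y - x) ∈ U := by
    intro t ht
    by_contra hn
    have := hl ⟨⟨ht.1, ht.2.le.trans hs.1.2⟩, hn⟩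
    linarith [ht.2]
  refine ⟨s, ⟨h0, hs.1.2⟩, mem_frontier_of hU ?_ hs.2, hin⟩
  have : s ∈ closure (Ico (0:ℝ) s) := by rw [closure_Ico h0.ne]; exact ⟨h0.le, le_rfl⟩
  exact map_mem_closure (f := fun t : ℝ => x + t • (y - x)) hc this hin

theorem mvt {U : Set (EE n)} (hU : IsOpen U) {f : EE n → ℝ} (hf : DifferentiableOn ℝ f U)
    (hc : ContinuousOn f (closure U)) {x v q : EE n} {s ω : ℝ} (hs : 0 ≤ s) (hx : x ∈ U)
    (hpath : ∀ t ∈ Ico (0:ℝ) s, x + t • v ∈ U)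
    (hb : ∀ t ∈ Ico (0:ℝ) s, ‖gradient f (x + t • v) - q‖ ≤ ω) :
    |f (x + s • v) - f x - s * inner ℝ q v| ≤ ω * s * ‖v‖ := by
  rcases hs.eq_or_lt with h0 | h0
  · subst h0; simp
  have hline : Continuous (fun t : ℝ => x + t • v) := by fun_prop
  have hcl : ∀ t ∈ Icc (0:ℝ) s, x + t • v ∈ closure U := by
    intro t ht
    have : t ∈ closure (Ico (0:ℝ) s) := by rw [closure_Ico h0.ne]; exact ht
    exact map_mem_closure (f := fun t : ℝ => x + t • v) hline this hpath
  have := norm_image_sub_le_of_norm_deriv_right_le_segment (a := 0) (b := s)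
    (f := fun t : ℝ => f (x + t • v) - t * inner ℝ q v)
    (f' := fun t => inner ℝ (gradient f (x + t • v) - q) v) (C := ω * ‖v‖) ?_ ?_ ?_ s ⟨hs, le_rfl⟩
  · simp at this
    rw [show f (x + s • v) - f x - s * inner ℝ q v = f (x + s • v) - s * inner ℝ q v - f x by ring]
    calc _ ≤ _ := this
      _ = _ := by ring
  · refine ContinuousOn.sub (hc.comp hline.continuousOn hcl) (by fun_prop)
  · intro t ht
    have hd := (hf.differentiableAt (hU.mem_nhds (hpath t ht))).hasFDerivAt
    have hl : HasDerivAt (fun t : ℝ => x + t • v) v t := by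
      simpa using ((hasDerivAt_id t).smul_const v).const_add x
    have h2 := (hd.comp_hasDerivAt t hl).sub ((hasDerivAt_id t).mul_const (inner ℝ q v))
    refine (h2.congr_deriv ?_).hasDerivWithinAt
    rw [inner_sub_left, inner_gradient_left]; simp
  · intro t ht
    calc _ ≤ ‖gradient f (x + t • v) - q‖ * ‖v‖ := norm_inner_le_norm _ _
      _ ≤ _ := by gcongr; exact hb t ht

theorem bdry_lip {U : Set (EE n)} (hU : IsOpen U) {f : EE n → ℝ} (hf : DifferentiableOn ℝ f U)
    (hc : ContinuousOn f (closure U)) (h0 : ∀ x ∈ frontier U, f x = 0) {S : Set (EE n)} (hS : Convex ℝ S)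
    {L : ℝ} (hL : ∀ x ∈ U, x ∈ S → ‖gradient f x‖ ≤ L) {x y : EE n} (hx : x ∈ U) (hxS : x ∈ S)
    (hy : y ∉ U) (hyS : y ∈ S) : |f x| ≤ L * ‖x - y‖ := by
  obtain ⟨s, hs, hfr, hpath⟩ := exit_point hU hx hy
  have := mvt hU hf hc (q := 0) (ω := L) hs.1.le hx hpath (fun t ht => by
    simp only [sub_zero]
    refine hL _ (hpath t ht) ?_
    exact hS.add_smul_sub_mem hxS hyS ⟨ht.1, ht.2.le.trans hs.2⟩)
  rw [h0 _ hfr] at this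
  simp at this
  have hL0 : 0 ≤ L := (norm_nonneg _).trans (hL x hx hxS)
  rw [norm_sub_rev x y]
  calc |f x| ≤ L * s * ‖y - x‖ := this
    _ ≤ L * 1 * ‖y - x‖ := by gcongr; exact hs.2
    _ = _ := by ring

theorem ray_mem {U : Set (EE n)} (hU : IsOpen U) {f : EE n → ℝ} (hf : DifferentiableOn ℝ f U)
    (hc : ContinuousOn f (closure U)) (h0 : ∀ x ∈ frontier U, f x = 0) {x v q : EE n} {ω : ℝ} (hx : x ∈ U)
    (hfx : 0 ≤ f x) (hb : ∀ t ∈ Icc (0:ℝ) 1, x + t • v ∈ U → ‖gradient f (x + t • v) - q‖ ≤ ω)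
    (hq : ω * ‖v‖ < inner ℝ q v) : ∀ s ∈ Icc (0:ℝ) 1, x + s • v ∈ U := by
  intro s hs
  by_contra hn
  obtain ⟨s', hs', hfr, hpath⟩ := exit_point hU hx hn
  have he : ∀ t : ℝ, x + t • (x + s • v - x) = x + (t * s) • v := by
    intro t; rw [add_sub_cancel_left, smul_smul]
  simp only [he] at hfr hpath
  have hspos : 0 < s := by
    rcases hs.1.eq_or_lt with h | h
    · exfalso; apply hn; rw [← h]; simpa using hx
    · exact h
  have hp2 : ∀ t ∈ Ico (0:ℝ) (s' * s), x + t • v ∈ U := by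
    intro t ht
    have := hpath (t / s) ⟨div_nonneg ht.1 hspos.le, by rw [div_lt_iff₀ hspos]; exact ht.2⟩
    rwa [div_mul_cancel₀ _ hspos.ne'] at this
  have hle : s' * s ≤ 1 := mul_le_one₀ hs'.2 hs.1 hs.2
  have := mvt hU hf hc (q := q) (ω := ω) (mul_pos hs'.1 hspos).le hx hp2 (fun t ht =>
    hb t ⟨ht.1, ht.2.le.trans hle⟩ (hp2 t ht))
  rw [h0 _ hfr] at this
  have h1 := (abs_le.1 this).1
  have h2 : 0 < s' * s := mul_pos hs'.1 hspos
  nlinarith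

theorem gradient_neg' (f : EE n → ℝ) (x : EE n) : gradient (fun y => - f y) x = - gradient f x := by
  unfold gradient
  rw [fderiv_fun_neg]; simp

theorem same_sign {U : Set (EE n)} (hU : IsOpen U) {f : EE n → ℝ} (hf : DifferentiableOn ℝ f U)
    (hc : ContinuousOn f (closure U)) (h0 : ∀ x ∈ frontier U, f x = 0) {z q : EE n} {ω r : ℝ} (hr : 0 < r)
    (hb : ∀ x ∈ U, x ∈ Metric.ball z (8 * r) → ‖gradient f x - q‖ ≤ ω) (hq : 3 * ω < ‖q‖) (hω : 0 ≤ ω)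
    {x w : EE n} (hx : x ∈ U) (hw : w ∈ U) (hxb : x ∈ Metric.ball z r) (hwb : w ∈ Metric.ball z r)
    (hfx : 0 ≤ f x) (hfw : 0 ≤ f w) : |f x - f w - inner ℝ q (x - w)| ≤ 10 * ω * r := by
  have hq0 : 0 < ‖q‖ := by linarith
  set e : EE n := (‖q‖⁻¹) • q with he
  have hen : ‖e‖ = 1 := by rw [he, norm_smul]; simp; field_simp
  have hqe : inner ℝ q e = ‖q‖ := by
    rw [he, inner_smul_right, real_inner_self_eq_norm_sq]; field_simp
  have hxw : ‖w - x‖ ≤ 2 * r := by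
    rw [mem_ball_iff_norm] at hxb hwb
    calc ‖w - x‖ = ‖(w - z) - (x - z)‖ := by congr 1; abel
      _ ≤ ‖w - z‖ + ‖x - z‖ := norm_sub_le _ _
      _ ≤ 2 * r := by linarith
  have key : ∀ a : EE n, a ∈ U → a ∈ Metric.ball z r → 0 ≤ f a → ∀ v : EE n, ‖v‖ ≤ 6 * r →
      2 * r * ‖q‖ ≤ inner ℝ q v → |f (a + v) - f a - inner ℝ q v| ≤ ω * ‖v‖ := by
    intro a ha hab hfa v hv hqv
    have hmem : ∀ t ∈ Icc (0:ℝ) 1, a + t • v ∈ Metric.ball z (8 * r) := by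
      intro t ht
      rw [mem_ball_iff_norm] at hab ⊢
      calc ‖a + t • v - z‖ = ‖(a - z) + t • v‖ := by congr 1; abel
        _ ≤ ‖a - z‖ + ‖t • v‖ := norm_add_le _ _
        _ ≤ ‖a - z‖ + 1 * ‖v‖ := by
          rw [norm_smul, Real.norm_of_nonneg ht.1]; gcongr; exact ht.2
        _ < 8 * r := by linarith
    have hray := ray_mem hU hf hc h0 (v := v) (q := q) (ω := ω) ha hfa
      (fun t ht hm => hb _ hm (hmem t ht)) (by nlinarith [norm_nonneg v])
    have := mvt hU hf hc (q := q) (ω := ω) (s := 1) zero_le_one ha (fun t ht => hray t ⟨ht.1, ht.2.le⟩)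
      (fun t ht => hb _ (hray t ⟨ht.1, ht.2.le⟩) (hmem t ⟨ht.1, ht.2.le⟩))
    simpa using this
  have hin : |inner ℝ q (w - x)| ≤ ‖q‖ * (2 * r) :=
    (abs_real_inner_le_norm _ _).trans (by gcongr)
  have hn1 : ‖(4 * r) • e‖ = 4 * r := by rw [norm_smul, hen]; simp; linarith
  have hi1 : inner ℝ q ((4 * r) • e) = 4 * r * ‖q‖ := by rw [inner_smul_right, hqe]
  have hn2 : ‖(w - x) + (4 * r) • e‖ ≤ 6 * r := (norm_add_le _ _).trans (by linarith)
  have h1 := key x hx hxb hfx ((w - x) + (4 * r) • e) hn2 (by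
    rw [inner_add_right, hi1]; nlinarith [abs_le.1 hin])
  have h2 := key w hw hwb hfw ((4 * r) • e) (by linarith) (by
    rw [hi1]; nlinarith)
  rw [show x + ((w - x) + (4 * r) • e) = w + (4 * r) • e by abel, inner_add_right] at h1
  have h3 : inner ℝ q (w - x) = - inner ℝ q (x - w) := by rw [← inner_neg_right]; simp
  have h4 : ω * ‖(w - x) + (4 * r) • e‖ ≤ ω * (6 * r) := by gcongr
  rw [hn1] at h2
  rw [h3] at h1
  rw [abs_le] at h1 h2 ⊢
  constructor <;> linarith

theorem taylor_comp {U : Set (EE n)} (hU : IsOpen U) {f : EE n → ℝ} (hf : DifferentiableOn ℝ f U)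
    (hc : ContinuousOn f (closure U)) (h0 : ∀ x ∈ frontier U, f x = 0) {z q : EE n} {ω r : ℝ} (hr : 0 < r)
    (hb : ∀ x ∈ U, x ∈ Metric.ball z (8 * r) → ‖gradient f x - q‖ ≤ ω) (hω : 0 ≤ ω) (hz : z ∈ U)
    {x : EE n} (hx : x ∈ connectedComponentIn (U ∩ Metric.ball z r) z) :
    |f x - f z - inner ℝ q (x - z)| ≤ 20 * ω * r := by
  have hsub := connectedComponentIn_subset (U ∩ Metric.ball z r) z
  have hxm := hsub hx
  have hzm : z ∈ U ∩ Metric.ball z r := ⟨hz, by simpa using hr⟩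
  have hωr : 0 ≤ ω * r := by positivity
  by_cases hq : ‖q‖ ≤ 3 * ω
  · have hball : ∀ y ∈ Metric.ball z r, y ∈ Metric.ball z (8 * r) := fun y hy =>
      Metric.ball_subset_ball (by linarith) hy
    have hxz : ‖x - z‖ ≤ r := (mem_ball_iff_norm.1 hxm.2).le
    by_cases hseg : ∀ t ∈ Icc (0:ℝ) 1, z + t • (x - z) ∈ U
    · have := mvt hU hf hc (q := q) (ω := ω) (s := 1) zero_le_one hz (fun t ht => hseg t ⟨ht.1, ht.2.le⟩)
        (fun t ht => hb _ (hseg t ⟨ht.1, ht.2.le⟩) (hball _ ((convex_ball z r).add_smul_sub_mem hzm.2 hxm.2 ⟨ht.1, ht.2.le⟩)))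
      simp at this
      refine this.trans ?_
      nlinarith
    · push Not at hseg
      obtain ⟨t, ht, hy⟩ := hseg
      set y := z + t • (x - z) with hyd
      have hyb : y ∈ Metric.ball z r := (convex_ball z r).add_smul_sub_mem hzm.2 hxm.2 ht
      have hL : ∀ x ∈ U, x ∈ Metric.ball z r → ‖gradient f x‖ ≤ 4 * ω := by
        intro a ha hab
        have := hb a ha (hball a hab)
        calc ‖gradient f a‖ = ‖(gradient f a - q) + q‖ := by simp
          _ ≤ _ := norm_add_le _ _
          _ ≤ _ := by linarith
      have h1 := bdry_lip hU hf hc h0 (convex_ball z r) hL hxm.1 hxm.2 hy hyb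
      have h2 := bdry_lip hU hf hc h0 (convex_ball z r) hL hz hzm.2 hy hyb
      have e1 : ‖x - y‖ = (1 - t) * ‖x - z‖ := by
        rw [show x - y = (1 - t) • (x - z) by rw [hyd]; module, norm_smul, Real.norm_of_nonneg (by linarith [ht.2])]
      have e2 : ‖z - y‖ = t * ‖x - z‖ := by
        rw [show z - y = (-t) • (x - z) by rw [hyd]; module, norm_smul, norm_neg, Real.norm_of_nonneg ht.1]
      have h3 : |inner ℝ q (x - z)| ≤ 3 * ω * r := (abs_real_inner_le_norm _ _).trans (by gcongr)
      rw [e1] at h1; rw [e2] at h2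
      have h4 : ω * ‖x - z‖ ≤ ω * r := by gcongr
      rw [abs_le] at h1 h2 h3 ⊢
      constructor <;> nlinarith
  · push Not at hq
    have hpos : ∀ a b : EE n, a ∈ U ∩ Metric.ball z r → b ∈ U ∩ Metric.ball z r → 0 ≤ f a → 0 ≤ f b →
        |f a - f b - inner ℝ q (a - b)| ≤ 10 * ω * r := fun a b ha hb' h1 h2 =>
      same_sign hU hf hc h0 hr hb hq hω ha.1 hb'.1 ha.2 hb'.2 h1 h2
    have hneg : ∀ a b : EE n, a ∈ U ∩ Metric.ball z r → b ∈ U ∩ Metric.ball z r → f a ≤ 0 → f b ≤ 0 →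
        |f a - f b - inner ℝ q (a - b)| ≤ 10 * ω * r := by
      intro a b ha hb' h1 h2
      have := same_sign hU (f := fun y => - f y) hf.neg hc.neg (fun x hx => by simp [h0 x hx]) (q := -q) hr
        (fun x hx hxb => by
          rw [gradient_neg', ← neg_sub', norm_neg]; exact hb x hx hxb) (by simpa using hq) hω ha.1 hb'.1 ha.2 hb'.2
        (by simpa using h1) (by simpa using h2)
      rw [← abs_neg] at this
      simp only [inner_neg_left] at this
      convert this using 2
      ring
    have hconn : IsPreconnected (connectedComponentIn (U ∩ Metric.ball z r) z) := isPreconnected_connectedComponentIn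
    have hzV : z ∈ connectedComponentIn (U ∩ Metric.ball z r) z := mem_connectedComponentIn hzm
    have hcV : ContinuousOn f (connectedComponentIn (U ∩ Metric.ball z r) z) :=
      hc.mono (fun y hy => subset_closure (hsub hy).1)
    have comb : ∀ w ∈ connectedComponentIn (U ∩ Metric.ball z r) z, f w = 0 → |f x - f z - inner ℝ q (x - z)| ≤ 20 * ω * r := by
      intro w hw hfw
      have hA : ∀ a ∈ U ∩ Metric.ball z r, |f a - f w - inner ℝ q (a - w)| ≤ 10 * ω * r := by
        intro a ha
        rcases le_total 0 (f a) with h | h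
        · exact hpos a w ha (hsub hw) h hfw.ge
        · exact hneg a w ha (hsub hw) h hfw.le
      have h1 := hA x hxm
      have h2 := hA z hzm
      have h3 : inner ℝ q (x - z) = inner ℝ q (x - w) - inner ℝ q (z - w) := by
        rw [← inner_sub_right]; congr 1; abel
      rw [abs_le] at h1 h2 ⊢
      constructor <;> linarith
    rcases le_total 0 (f x) with h1 | h1 <;> rcases le_total 0 (f z) with h2 | h2
    · exact (hpos x z hxm hzm h1 h2).trans (by nlinarith)
    · obtain ⟨w, hw, hw0⟩ := hconn.intermediate_value hzV hx hcV ⟨h2, h1⟩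
      exact comb w hw hw0
    · obtain ⟨w, hw, hw0⟩ := hconn.intermediate_value hx hzV hcV ⟨h1, h2⟩
      exact comb w hw hw0
    · exact (hneg x z hxm hzm h1 h2).trans (by nlinarith)

theorem diff_interior {U : Set (EE n)} (hU : IsOpen U) {f : EE n → ℝ} (hf : DifferentiableOn ℝ f U)
    (hc : ContinuousOn f (closure U)) (h0 : ∀ x ∈ frontier U, f x = 0)
    (hg : ContinuousOn (gradient f) (closure U)) {x : EE n} (hx : x ∈ interior (closure U)) :
    DifferentiableAt ℝ f x := by
  by_cases hxU : x ∈ U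
  · exact hf.differentiableAt (hU.mem_nhds hxU)
  have hxc : x ∈ closure U := interior_subset hx
  have hxf := mem_frontier_of hU hxc hxU
  by_contra hnd
  have hg0 : gradient f x = 0 := by
    unfold gradient; rw [fderiv_zero_of_not_differentiableAt hnd]; simp
  apply hnd
  refine HasFDerivAt.differentiableAt (f' := 0) ?_
  rw [hasFDerivAt_iff_isLittleO, Asymptotics.isLittleO_iff]
  intro σ hσ
  have hgx := hg x hxc
  rw [Metric.continuousWithinAt_iff] at hgx
  obtain ⟨d, hd, hgd⟩ := hgx σ hσ
  have hbn : Metric.ball x d ∩ closure U ∈ 𝓝 x :=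
    inter_mem (Metric.ball_mem_nhds x hd) (mem_interior_iff_mem_nhds.1 hx)
  filter_upwards [hbn] with y hy
  rw [h0 x hxf]
  simp only [sub_zero, zero_apply]
  by_cases hyU : y ∈ U
  · exact bdry_lip hU hf hc h0 (convex_ball x d) (fun a ha hab => by
      have := hgd (subset_closure ha) hab
      rw [hg0, dist_zero_right] at this
      exact this.le) hyU hy.1 hxU (Metric.mem_ball_self hd)
  · rw [h0 y (mem_frontier_of hU hy.2 hyU)]; simp; positivity

end S18

namespace S18
open Topology

variable {n : ℕ} {U : Set (EE n)} {H : Bool → EE n → EE n → ℝ} {ψ Φ : Bool → EE n → ℝ}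
    {γ : ℝ → ℝ} {α Cb : ℝ}

theorem Data.mono (D : Data U H ψ Φ γ α Cb) : Monotone γ := by
  apply monotone_of_deriv_nonneg (D.hγ.differentiable (by simp))
  intro s
  rcases lt_or_ge 0 s with h | h
  · exact (D.γ' s h).1.le
  · have : IsLocalMin γ s := Eventually.of_forall fun t => by rw [D.γ0 s h]; exact D.γnn t
    rw [this.deriv_eq_zero]

theorem Data.lip (D : Data U H ψ Φ γ α Cb) {a b : ℝ} (hab : a ≤ b) : γ b - γ a ≤ b - a := by
  have := image_sub_le_mul_sub_of_deriv_le (D.hγ.differentiable (by simp)) (C := 1) (fun s => by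
    rcases lt_or_ge 0 s with h | h
    · exact (D.γ' s h).2
    · have : IsLocalMin γ s := Eventually.of_forall fun t => by rw [D.γ0 s h]; exact D.γnn t
      rw [this.deriv_eq_zero]; norm_num) hab
  linarith

theorem exists_max_bool {X : Type*} [TopologicalSpace X] {K : Set X} (hK : IsCompact K) (hne : K.Nonempty)
    {F : Bool → X → ℝ} (hF : ∀ j, ContinuousOn (F j) K) :
    ∃ j, ∃ x ∈ K, ∀ k, ∀ y ∈ K, F k y ≤ F j x := by
  have h : ∀ j, ∃ x ∈ K, ∀ y ∈ K, F j y ≤ F j x := fun j => by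
    obtain ⟨x, hx, hm⟩ := hK.exists_isMaxOn hne (hF j)
    exact ⟨x, hx, fun y hy => hm hy⟩
  obtain ⟨x, hx, hxm⟩ := h true
  obtain ⟨x', hx', hxm'⟩ := h false
  rcases le_total (F true x) (F false x') with hh | hh
  · refine ⟨false, x', hx', fun k y hy => ?_⟩
    cases k
    · exact hxm' y hy
    · exact (hxm y hy).trans hh
  · refine ⟨true, x, hx, fun k y hy => ?_⟩
    cases k
    · exact (hxm' y hy).trans hh
    · exact hxm y hy

theorem Data.cpt (D : Data U H ψ Φ γ α Cb) : IsCompact (closure U) := D.bdd.isCompact_closure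

theorem Data.Hcont (D : Data U H ψ Φ γ α Cb) (j : Bool) : Continuous (fun q : EE n × EE n => H j q.1 q.2) :=
  (D.hH j).continuous

theorem Data.Hbdd (D : Data U H ψ Φ γ α Cb) (P : ℝ) :
    ∃ C, 1 ≤ C ∧ ∀ j, ∀ x ∈ closure U, ∀ p : EE n, ‖p‖ ≤ P → |H j x p| ≤ C := by
  have hK : IsCompact (closure U ×ˢ Metric.closedBall (0 : EE n) P) := D.cpt.prod (isCompact_closedBall _ _)
  have h : ∀ j, ∃ C, ∀ x ∈ closure U, ∀ p : EE n, ‖p‖ ≤ P → |H j x p| ≤ C := by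
    intro j
    obtain ⟨C, hC⟩ := hK.exists_bound_of_continuousOn (D.Hcont j).continuousOn
    exact ⟨C, fun x hx p hp => hC (x, p) ⟨hx, by simpa using hp⟩⟩
  obtain ⟨a, ha⟩ := h true
  obtain ⟨b, hb⟩ := h false
  refine ⟨max 1 (max a b), le_max_left _ _, fun j x hx p hp => ?_⟩
  cases j
  · exact (hb x hx p hp).trans ((le_max_right _ _).trans (le_max_right _ _))
  · exact (ha x hx p hp).trans ((le_max_left _ _).trans (le_max_right _ _))

theorem max_test {u : EE n → ℝ} (hU : IsOpen U) (hu : ContDiffOn ℝ 2 u U) {x p : EE n} (hx : x ∈ U) {k : ℝ}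
    {S : Set (EE n)} (hS : S ∈ 𝓝 x)
    (hmax : ∀ x' ∈ S, u x' - (inner ℝ p (x' - x) + k / 2 * ‖x' - x‖^2) ≤ u x) :
    gradient u x = p ∧ lap u x ≤ n * k := by
  have h : IsLocalMax (fun x' => (1:ℝ) * u x' - (inner ℝ p (x' - x) + k / 2 * ‖x' - x‖^2)) x := by
    filter_upwards [hS] with x' hx'
    simpa using hmax x' hx'
  refine ⟨?_, ?_⟩
  · simpa using grad_of_max (continuousOn_deriv hU hu hx) h
  · simpa using lap_of_max hU hu hx h

theorem min_test {u : EE n → ℝ} (hU : IsOpen U) (hu : ContDiffOn ℝ 2 u U) {x p : EE n} (hx : x ∈ U) {k : ℝ}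
    {S : Set (EE n)} (hS : S ∈ 𝓝 x)
    (hmin : ∀ x' ∈ S, u x ≤ u x' - (inner ℝ p (x' - x) - k / 2 * ‖x' - x‖^2)) :
    gradient u x = p ∧ -(n * k) ≤ lap u x := by
  have h : IsLocalMax (fun x' => (-1:ℝ) * u x' - (inner ℝ (-p) (x' - x) + k / 2 * ‖x' - x‖^2)) x := by
    filter_upwards [hS] with x' hx'
    have := hmin x' hx'
    simp; linarith
  refine ⟨?_, ?_⟩
  · simpa using grad_of_max (continuousOn_deriv hU hu hx) h
  · have := lap_of_max hU hu hx h
    linarith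

theorem Linf (D : Data U H ψ Φ γ α Cb) : ∃ C0, 1 ≤ C0 ∧ ∀ ε > 0, ∀ u, Sol U H ψ γ ε u →
    ∀ j, ∀ x ∈ closure U, |u j x| ≤ C0 := by
  obtain ⟨C0, hC0, hH⟩ := D.Hbdd 0
  refine ⟨C0, hC0, fun ε hε u S j x hx => ?_⟩
  rw [abs_le]
  constructor
  · obtain ⟨k, z, hz, hm⟩ := exists_max_bool D.cpt ⟨x, hx⟩ (F := fun j x => - u j x) (fun j => (S.cont j).neg)
    have h1 := hm j x hx
    suffices -C0 ≤ u k z by linarith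
    by_cases hzU : z ∈ U
    · obtain ⟨hg, hl⟩ := min_test D.hU (S.c2 k) (p := 0) (k := 0) hzU (D.hU.mem_nhds hzU) (fun x' hx' => by
        have := hm k x' (subset_closure hx'); simp; linarith)
      have hp := S.pde k z hzU
      have h2 := hm (!k) z hz
      rw [hg, D.γ0 _ (div_nonpos_of_nonpos_of_nonneg (by linarith [D.ψα k z hz, D.hα]) hε.le)] at hp
      have h3 := hH k z hz 0 (by simp)
      have h4 : 0 ≤ ε * lap (u k) z := mul_nonneg hε.le (by simpa using hl)
      linarith [(abs_le.1 h3).2]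
    · rw [S.bdry k z (mem_frontier_of D.hU hz hzU)]; linarith
  · obtain ⟨z, hz, hm⟩ := D.cpt.exists_isMaxOn ⟨x, hx⟩ (S.cont j)
    have h1 : u j x ≤ u j z := hm hx
    suffices u j z ≤ C0 by linarith
    by_cases hzU : z ∈ U
    · obtain ⟨hg, hl⟩ := max_test D.hU (S.c2 j) (p := 0) (k := 0) hzU (D.hU.mem_nhds hzU) (fun x' hx' => by
        have : u j x' ≤ u j z := hm (subset_closure hx'); simp; linarith)
      have hp := S.pde j z hzU
      rw [hg] at hp
      have h3 := hH j z hz 0 (by simp)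
      have h4 : ε * lap (u j) z ≤ 0 := mul_nonpos_of_nonneg_of_nonpos hε.le (by simpa using hl)
      linarith [(abs_le.1 h3).1, D.γnn ((u j z - u (!j) z - ψ j z) / ε)]
    · rw [S.bdry j z (mem_frontier_of D.hU hz hzU)]; linarith

theorem norm_maj {z : EE n} (hz : 0 < ‖z‖) (h : EE n) :
    ‖z + h‖ ≤ ‖z‖ + (inner ℝ ((‖z‖⁻¹) • z) h + (‖z‖⁻¹) / 2 * ‖h‖^2) := by
  have h1 : ‖z + h‖^2 = ‖z‖^2 + 2 * inner ℝ z h + ‖h‖^2 := norm_add_sq_real z h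
  rw [inner_smul_left]
  simp only [conj_trivial]
  set t := ‖z‖
  have h2 : ‖z + h‖ ≤ (‖z+h‖^2 / t + t) / 2 := by
    rw [le_div_iff₀ (by norm_num), ← sub_nonneg]
    have : ‖z + h‖ ^ 2 / t + t - ‖z + h‖ * 2 = (‖z+h‖ - t)^2 / t := by field_simp; ring
    rw [this]; positivity
  refine h2.trans (le_of_eq ?_)
  rw [h1]; field_simp; ring

theorem cone (D : Data U H ψ Φ γ α Cb) : ∃ R > 0, ∀ ε > 0, ∀ u, Sol U H ψ γ ε u → ∀ c : EE n, ∀ ρ > 0,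
    ε ≤ ρ → (∀ y ∈ closure U, ρ ≤ ‖y - c‖) → ∀ j, ∀ x ∈ closure U, u j x ≤ R * ‖x - c‖ := by
  obtain ⟨R1, hR1⟩ := D.suplin true (n + 1)
  obtain ⟨R2, hR2⟩ := D.suplin false (n + 1)
  set R := max 1 (max R1 R2) with hR
  have hR0 : 0 < R := lt_of_lt_of_le one_pos (le_max_left _ _)
  have hHR : ∀ j, ∀ x ∈ closure U, ∀ p : EE n, ‖p‖ = R → (n + 1) * R ≤ H j x p := by
    intro j x hx p hp
    cases j
    · rw [← hp]; exact hR2 x hx p (by rw [hp]; exact (le_max_right _ _).trans (le_max_right _ _))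
    · rw [← hp]; exact hR1 x hx p (by rw [hp]; exact (le_max_left _ _).trans (le_max_right _ _))
  refine ⟨R, hR0, fun ε hε u S c ρ hρ hερ hc j x hx => ?_⟩
  obtain ⟨z, hz, hm⟩ := D.cpt.exists_isMaxOn ⟨x, hx⟩ (f := fun x => u j x - R * ‖x - c‖)
    ((S.cont j).sub (by fun_prop))
  have h1 : u j x - R * ‖x - c‖ ≤ u j z - R * ‖z - c‖ := hm hx
  by_contra hcon
  push Not at hcon
  have h2 : 0 < u j z - R * ‖z - c‖ := by linarith
  have hzU : z ∈ U := by
    by_contra hzU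
    rw [S.bdry j z (mem_frontier_of D.hU hz hzU)] at h2
    have : 0 ≤ R * ‖z - c‖ := by positivity
    linarith
  have ht : 0 < ‖z - c‖ := lt_of_lt_of_le hρ (hc z hz)
  obtain ⟨hg, hl⟩ := max_test D.hU (S.c2 j) (p := (R * ‖z - c‖⁻¹) • (z - c)) (k := R * ‖z - c‖⁻¹) hzU
    (D.hU.mem_nhds hzU) (fun x' hx' => by
      have h3 : u j x' - R * ‖x' - c‖ ≤ u j z - R * ‖z - c‖ := hm (subset_closure hx')
      have h4 := norm_maj ht (x' - z)
      rw [show z - c + (x' - z) = x' - c by abel] at h4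
      have h5 := mul_le_mul_of_nonneg_left h4 hR0.le
      rw [mul_smul, inner_smul_left]
      simp only [conj_trivial]
      linarith)
  have hgn : ‖gradient (u j) z‖ = R := by
    rw [hg, norm_smul, Real.norm_of_nonneg (by positivity)]; field_simp
  have hp := S.pde j z hzU
  have h6 := hHR j z hz _ hgn
  have h7 := D.γnn ((u j z - u (!j) z - ψ j z) / ε)
  have h8 : ε * lap (u j) z ≤ n * R := by
    have : ε * ‖z - c‖⁻¹ ≤ 1 := by
      rw [← div_eq_mul_inv, div_le_one ht]; exact hερ.trans (hc z hz)
    calc ε * lap (u j) z ≤ ε * (n * (R * ‖z - c‖⁻¹)) := by gcongr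
      _ = n * R * (ε * ‖z - c‖⁻¹) := by ring
      _ ≤ n * R * 1 := by gcongr
      _ = _ := by ring
  have h9 : 0 ≤ R * ‖z - c‖ := by positivity
  linarith

theorem upper_near (D : Data U H ψ Φ γ α Cb) {η : ℝ} (hη : 0 < η) : ∃ d0 > 0, ∃ ε0 > 0, ∀ ε > 0, ε < ε0 →
    ∀ u, Sol U H ψ γ ε u → ∀ x ∈ closure U, (∃ c, c ∉ closure U ∧ ‖x - c‖ < d0) → ∀ j, u j x ≤ η := by
  obtain ⟨R, hR, hcone⟩ := cone D
  set s := η / R with hs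
  have hs0 : 0 < s := by positivity
  set T := closure (closure U)ᶜ with hT
  have hK : IsCompact (closure U ∩ T) := D.cpt.inter_right isClosed_closure
  have hP : ∃ ρ > 0, ∀ x ∈ closure U ∩ T, ∃ c, ‖x - c‖ < s ∧ ∀ y ∈ closure U, ρ ≤ ‖y - c‖ := by
    refine hK.induction_on (p := fun A => ∃ ρ > 0, ∀ x ∈ A, ∃ c, ‖x - c‖ < s ∧ ∀ y ∈ closure U, ρ ≤ ‖y - c‖) ?_ ?_ ?_ ?_
    · exact ⟨1, one_pos, by simp⟩
    · rintro A B hAB ⟨ρ, hρ, h⟩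
      exact ⟨ρ, hρ, fun x hx => h x (hAB hx)⟩
    · rintro A B ⟨ρ, hρ, h⟩ ⟨ρ', hρ', h'⟩
      refine ⟨min ρ ρ', lt_min hρ hρ', ?_⟩
      rintro x (hx | hx)
      · obtain ⟨c, h1, h2⟩ := h x hx
        exact ⟨c, h1, fun y hy => (min_le_left _ _).trans (h2 y hy)⟩
      · obtain ⟨c, h1, h2⟩ := h' x hx
        exact ⟨c, h1, fun y hy => (min_le_right _ _).trans (h2 y hy)⟩
    · rintro x ⟨hx, hxT⟩
      obtain ⟨c, hc, hxc⟩ := Metric.mem_closure_iff.1 hxT s hs0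
      obtain ⟨ρ, hρ, hb⟩ := Metric.isOpen_iff.1 isClosed_closure.isOpen_compl c hc
      refine ⟨Metric.ball c s, mem_nhdsWithin_of_mem_nhds (Metric.isOpen_ball.mem_nhds hxc), ρ, hρ, fun y hy => ⟨c, ?_, ?_⟩⟩
      · exact mem_ball_iff_norm.1 hy
      · intro y hy
        by_contra hlt
        push Not at hlt
        exact hb (mem_ball_iff_norm.2 hlt) hy
  obtain ⟨ρ, hρ, hcov⟩ := hP
  set O := ⋃ c ∈ {c : EE n | ∀ y ∈ closure U, ρ ≤ ‖y - c‖}, Metric.ball c s with hO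
  have hOo : IsOpen O := isOpen_biUnion fun _ _ => Metric.isOpen_ball
  have hdisj : Disjoint (closure U \ O) T := by
    rw [Set.disjoint_left]
    rintro x ⟨hx, hxO⟩ hxT
    obtain ⟨c, h1, h2⟩ := hcov x ⟨hx, hxT⟩
    exact hxO (mem_biUnion (show c ∈ {c : EE n | ∀ y ∈ closure U, ρ ≤ ‖y - c‖} from h2) (mem_ball_iff_norm.2 h1))
  obtain ⟨δ, hδ, hd⟩ := hdisj.exists_thickenings (D.cpt.diff hOo) isClosed_closure
  refine ⟨δ, hδ, ρ, hρ, fun ε hε hερ u S x hx ⟨c, hc, hxc⟩ j => ?_⟩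
  have hxO : x ∈ O := by
    by_contra hxO
    have hdl := Set.disjoint_left.1 hd
    refine @hdl c ?_ ?_
    · rw [Metric.mem_thickening_iff]; exact ⟨x, ⟨hx, hxO⟩, by rw [dist_comm, dist_eq_norm]; exact hxc⟩
    · exact Metric.self_subset_thickening hδ _ (subset_closure hc)
  simp only [hO, mem_iUnion, exists_prop] at hxO
  obtain ⟨c', h1, h2⟩ := hxO
  have := hcone ε hε u S c' ρ hρ hερ.le h1 j x hx
  have h3 : R * ‖x - c'‖ ≤ R * s := by gcongr; exact (mem_ball_iff_norm.1 h2).le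
  have h4 : R * s = η := by rw [hs]; field_simp
  linarith

end S18

namespace S18
open Topology

variable {n : ℕ} {U : Set (EE n)} {H : Bool → EE n → EE n → ℝ} {ψ Φ : Bool → EE n → ℝ}
    {γ : ℝ → ℝ} {α Cb : ℝ}

theorem max_three {u v w : EE n → ℝ} (hU : IsOpen U) (hu : ContDiffOn ℝ 2 u U) (hv : ContDiffOn ℝ 2 v U)
    (hw : ContDiffOn ℝ 2 w U) {x : EE n} (hx : x ∈ U) (hmax : ∀ y ∈ U, u y - v y - w y ≤ u x - v x - w x) :
    gradient u x - gradient v x = gradient w x ∧ lap u x - lap v x ≤ lap w x := by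
  have hd1 := continuousOn_deriv hU hu hx
  have hd2 := continuousOn_deriv hU hv hx
  have hd3 := continuousOn_deriv hU hw hx
  have hl : IsLocalMax (fun y => u y - v y - w y) x := by
    filter_upwards [hU.mem_nhds hx] with y hy using hmax y hy
  constructor
  · have h1 := hl.hasFDerivAt_eq_zero ((hd1.hasFDerivAt.sub hd2.hasFDerivAt).sub hd3.hasFDerivAt)
    have h2 : fderiv ℝ u x - fderiv ℝ v x = fderiv ℝ w x := by rwa [sub_eq_zero] at h1
    unfold gradient
    rw [← map_sub, h2]
  · rw [lap_eq hU hu hx, lap_eq hU hv hx, lap_eq hU hw hx, ← Finset.sum_sub_distrib]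
    refine Finset.sum_le_sum fun i _ => ?_
    obtain ⟨a, b⟩ := hasDeriv_line hU hw hx (EuclideanSpace.single i 1)
    have := second_two hU hu hv hx hx (EuclideanSpace.single i 1) (EuclideanSpace.single i 1) 1 1 a b ?_
    · simpa using this
    · have hc : ContinuousAt (fun t : ℝ => x + t • (EuclideanSpace.single i (1:ℝ) : EE n)) 0 := by fun_prop
      have ht : Tendsto (fun t : ℝ => x + t • (EuclideanSpace.single i (1:ℝ) : EE n)) (𝓝 0) (𝓝 x) := by
        simpa [ContinuousAt] using hc
      filter_upwards [ht.eventually (hU.mem_nhds hx)] with t h1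
      simpa using hmax _ h1

theorem max_two {u v : EE n → ℝ} (hU : IsOpen U) (hu : ContDiffOn ℝ 2 u U) (hv : ContDiffOn ℝ 2 v U)
    {x : EE n} (hx : x ∈ U) (hmax : ∀ y ∈ U, u y - v y ≤ u x - v x) :
    gradient u x = gradient v x ∧ lap u x ≤ lap v x := by
  have := max_three (w := fun _ => 0) hU hu hv contDiffOn_const hx (by simpa using hmax)
  have e1 : gradient (fun _ : EE n => (0:ℝ)) x = 0 := by unfold gradient; simp
  have e2 : lap (fun _ : EE n => (0:ℝ)) x = 0 := by unfold lap; simp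
  rw [e1, e2, sub_eq_zero] at this
  exact ⟨this.1, by linarith [this.2]⟩

theorem Data.Hunif (D : Data U H ψ Φ γ α Cb) (P : ℝ) {τ : ℝ} (hτ : 0 < τ) :
    ∃ d > 0, ∀ j, ∀ x ∈ closure U, ∀ y ∈ closure U, ∀ p q : EE n, ‖p‖ ≤ P → ‖q‖ ≤ P → ‖x - y‖ < d → ‖p - q‖ < d →
      |H j x p - H j y q| < τ := by
  have hK : IsCompact (closure U ×ˢ Metric.closedBall (0 : EE n) P) := D.cpt.prod (isCompact_closedBall _ _)
  have h : ∀ j, ∃ d > 0, ∀ x ∈ closure U, ∀ y ∈ closure U, ∀ p q : EE n, ‖p‖ ≤ P → ‖q‖ ≤ P → ‖x - y‖ < d → ‖p - q‖ < d →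
      |H j x p - H j y q| < τ := by
    intro j
    have := hK.uniformContinuousOn_of_continuous (D.Hcont j).continuousOn
    rw [Metric.uniformContinuousOn_iff] at this
    obtain ⟨d, hd, h⟩ := this τ hτ
    refine ⟨d, hd, fun x hx y hy p q hp hq h1 h2 => ?_⟩
    have := h (x, p) ⟨hx, by simpa using hp⟩ (y, q) ⟨hy, by simpa using hq⟩ (by
      rw [Prod.dist_eq]; simp only [dist_eq_norm]; exact max_lt h1 h2)
    simpa [Real.dist_eq] using this
  obtain ⟨a, ha, h1⟩ := h true
  obtain ⟨b, hb, h2⟩ := h false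
  refine ⟨min a b, lt_min ha hb, fun j x hx y hy p q hp hq e1 e2 => ?_⟩
  cases j
  · exact h2 x hx y hy p q hp hq (e1.trans_le (min_le_right _ _)) (e2.trans_le (min_le_right _ _))
  · exact h1 x hx y hy p q hp hq (e1.trans_le (min_le_left _ _)) (e2.trans_le (min_le_left _ _))

theorem bound_bool {X : Type*} [TopologicalSpace X] {F : Type*} [SeminormedAddCommGroup F] {K : Set X} (hK : IsCompact K)
    {f : Bool → X → F} (hf : ∀ j, ContinuousOn (f j) K) : ∃ C, 1 ≤ C ∧ ∀ j, ∀ x ∈ K, ‖f j x‖ ≤ C := by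
  obtain ⟨a, ha⟩ := hK.exists_bound_of_continuousOn (hf true)
  obtain ⟨b, hb⟩ := hK.exists_bound_of_continuousOn (hf false)
  refine ⟨max 1 (max a b), le_max_left _ _, fun j x hx => ?_⟩
  cases j
  · exact (hb x hx).trans ((le_max_right _ _).trans (le_max_right _ _))
  · exact (ha x hx).trans ((le_max_left _ _).trans (le_max_right _ _))

theorem unif_bool {K : Set (EE n)} (hK : IsCompact K) {F : Type*} [SeminormedAddCommGroup F]
    {f : Bool → EE n → F} (hf : ∀ j, ContinuousOn (f j) K) {τ : ℝ} (hτ : 0 < τ) :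
    ∃ d > 0, ∀ j, ∀ x ∈ K, ∀ y ∈ K, ‖x - y‖ < d → ‖f j x - f j y‖ < τ := by
  have h : ∀ j, ∃ d > 0, ∀ x ∈ K, ∀ y ∈ K, ‖x - y‖ < d → ‖f j x - f j y‖ < τ := by
    intro j
    have := hK.uniformContinuousOn_of_continuous (hf j)
    rw [Metric.uniformContinuousOn_iff] at this
    obtain ⟨d, hd, h⟩ := this τ hτ
    refine ⟨d, hd, fun x hx y hy h1 => ?_⟩
    have := h x hx y hy (by rw [dist_eq_norm]; exact h1)
    rwa [dist_eq_norm] at this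
  obtain ⟨a, ha, h1⟩ := h true
  obtain ⟨b, hb, h2⟩ := h false
  refine ⟨min a b, lt_min ha hb, fun j x hx y hy e1 => ?_⟩
  cases j
  · exact h2 x hx y hy (e1.trans_le (min_le_right _ _))
  · exact h1 x hx y hy (e1.trans_le (min_le_left _ _))

theorem lower (D : Data U H ψ Φ γ α Cb) {η : ℝ} (hη : 0 < η) : ∃ ε0 > 0, ∀ ε > 0, ε < ε0 →
    ∀ u, Sol U H ψ γ ε u → ∀ j, ∀ x ∈ closure U, Φ j x - η ≤ u j x := by
  by_cases hne : (closure U).Nonempty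
  swap
  · exact ⟨1, one_pos, fun ε _ _ u _ j x hx => (hne ⟨x, hx⟩).elim⟩
  have hα := D.hα
  obtain ⟨c, hc, hsub⟩ : ∃ c > 0, ∀ j, ∀ x ∈ closure U, Φ j x + H j x (gradient (Φ j) x) ≤ -c := by
    obtain ⟨j, x, hx, hm⟩ := exists_max_bool D.cpt hne (F := fun j x => Φ j x + H j x (gradient (Φ j) x)) (fun j => by
      refine (D.Φc j).add ?_
      exact (D.Hcont j).comp_continuousOn (continuousOn_id.prodMk (D.Φg j)))
    refine ⟨-(Φ j x + H j x (gradient (Φ j) x)), by linarith [D.sub j x hx], fun k y hy => ?_⟩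
    have := hm k y hy
    simp at this ⊢; linarith
  obtain ⟨L, hL1, hL⟩ := bound_bool D.cpt D.Φg
  obtain ⟨d0, hd0, hHu⟩ := D.Hunif (L + 1) (τ := c / 4) (by positivity)
  set ω := min d0 1 / 100 with hω
  have hω0 : 0 < ω := by have : 0 < min d0 1 := lt_min hd0 one_pos; positivity
  have hω1 : 50 * ω < d0 := by have := min_le_left d0 1; rw [hω]; linarith
  have hω2 : 50 * ω ≤ 1 := by have := min_le_right d0 1; rw [hω]; linarith
  obtain ⟨s, hs, hmod⟩ := unif_bool D.cpt D.Φg hω0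
  obtain ⟨r, hr, hr1, hr2, hr3, hr4, hr5⟩ : ∃ r > 0, 8 * r ≤ s ∧ r < d0 ∧ L * r ≤ η / 8 ∧ L * r ≤ α / 8 ∧ L * r ≤ c / 16 := by
    have hmm : 0 < min η (min α c) := lt_min hη (lt_min hα hc)
    have hL0 : 0 < L := by linarith
    refine ⟨min (s / 8) (min (d0 / 2) (min η (min α c) / (16 * L))), ?_, ?_, ?_, ?_⟩
    · refine lt_min (by positivity) (lt_min (by positivity) (by positivity))
    · have := min_le_left (s / 8) (min (d0 / 2) (min η (min α c) / (16 * L))); linarith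
    · have := min_le_right (s / 8) (min (d0 / 2) (min η (min α c) / (16 * L)))
      have := min_le_left (d0 / 2) (min η (min α c) / (16 * L))
      linarith
    · set r := min (s / 8) (min (d0 / 2) (min η (min α c) / (16 * L)))
      have h1 : r ≤ min η (min α c) / (16 * L) := (min_le_right _ _).trans (min_le_right _ _)
      rw [le_div_iff₀ (by positivity)] at h1
      have h2 := min_le_left η (min α c)
      have h3 := (min_le_right η (min α c)).trans (min_le_left _ _)
      have h4 := (min_le_right η (min α c)).trans (min_le_right _ _)
      refine ⟨?_, ?_, ?_⟩ <;> nlinarith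
  set K := 50 * ω / r with hK
  have hK0 : 0 < K := by positivity
  have hKr : K * r = 50 * ω := by rw [hK]; field_simp
  set F : Set (EE n) := closure U ∩ {x | ∀ y ∈ frontier U, r ≤ dist x y} with hF
  have hFc : IsCompact F := by
    refine D.cpt.inter_right ?_
    have : {x : EE n | ∀ y ∈ frontier U, r ≤ dist x y} = ⋂ y ∈ frontier U, {x | r ≤ dist x y} := by ext; simp
    rw [this]
    exact isClosed_biInter fun y _ => isClosed_le continuous_const (by fun_prop)
  have hFU : F ⊆ U := by
    rintro x ⟨hx, hx'⟩
    by_contra hxU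
    have := hx' x (mem_frontier_of D.hU hx hxU)
    simp at this; linarith
  obtain ⟨DD, hDD1, hDD⟩ := bound_bool hFc (f := fun j x => lap (Φ j) x) (fun j => (continuousOn_lap D.hU (D.Φ2 j)).mono hFU)
  have hDD0 : 0 < DD := by linarith
  refine ⟨min (c / (2 * DD)) (c / (4 * (n * K + 1))), lt_min (by positivity) (by positivity), ?_⟩
  intro ε hε hεlt u S j0 x0 hx0
  have hε1 : ε * DD < c / 2 := by
    have := hεlt.trans_le (min_le_left _ _)
    rw [lt_div_iff₀ (by linarith)] at this; linarith
  have hε2 : ε * (n * K) < c / 4 := by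
    have := hεlt.trans_le (min_le_right _ _)
    rw [lt_div_iff₀ (by positivity)] at this; nlinarith
  by_contra hcon
  push Not at hcon
  obtain ⟨k, z, hz, hmz⟩ := exists_max_bool D.cpt ⟨x0, hx0⟩ (F := fun j x => Φ j x - u j x) (fun j => (D.Φc j).sub (S.cont j))
  have hmη : u k z - Φ k z < -η := by have := hmz j0 x0 hx0; linarith
  set m := u k z - Φ k z with hm
  have hge : ∀ j, ∀ x ∈ closure U, Φ j x + m ≤ u j x := fun j x hx => by have := hmz j x hx; linarith
  have hzU : z ∈ U := by
    by_contra hzU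
    have hzf := mem_frontier_of D.hU hz hzU
    rw [S.bdry k z hzf, D.Φ0 k z hzf] at hm
    linarith
  by_cases hzF : z ∈ F
  · obtain ⟨hg, hl⟩ := max_two D.hU (D.Φ2 k) (S.c2 k) hzU (fun y hy => by
      have := hmz k y (subset_closure hy); linarith)
    have hp := S.pde k z hzU
    rw [← hg, D.γ0 _ (div_nonpos_of_nonpos_of_nonneg (by linarith [D.obst k z hz, hge (!k) z hz]) hε.le)] at hp
    have h1 := (abs_le.1 (hDD k z hzF)).1
    have h2 : -(ε * DD) ≤ ε * lap (u k) z := by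
      rw [← mul_neg]; gcongr; linarith
    linarith [hsub k z hz]
  have hy : ∃ y ∈ frontier U, ‖z - y‖ < r := by
    by_contra hno
    push Not at hno
    exact hzF ⟨hz, fun y hy => by rw [dist_eq_norm]; exact hno y hy⟩
  obtain ⟨y, hy, hzy⟩ := hy
  have hyU := frontier_not_mem D.hU hy
  set q := gradient (Φ k) z with hq
  have hqL : ‖q‖ ≤ L := hL k z hz
  have hdiff : ∀ j, DifferentiableOn ℝ (Φ j) U := fun j => (D.Φ2 j).differentiableOn (by norm_num)
  have hlipb : ∀ j, ∀ x ∈ U, |Φ j x| ≤ L * ‖x - y‖ := fun j x hx =>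
    bdry_lip D.hU (hdiff j) (D.Φc j) (D.Φ0 j) convex_univ (fun a ha _ => hL j a (subset_closure ha)) hx (mem_univ _) hyU (mem_univ _)
  have hΦz : |Φ k z| ≤ L * r := (hlipb k z hzU).trans (by gcongr)
  set V := connectedComponentIn (U ∩ Metric.ball z r) z with hV
  have hVsub : V ⊆ U ∩ Metric.ball z r := connectedComponentIn_subset _ _
  have hzm : z ∈ U ∩ Metric.ball z r := ⟨hzU, by simpa using hr⟩
  have hzV : z ∈ V := mem_connectedComponentIn hzm
  have hVo : IsOpen V := (D.hU.inter Metric.isOpen_ball).connectedComponentIn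
  have hVcU : closure V ⊆ closure U := closure_mono (fun a ha => (hVsub ha).1)
  have hVc : IsCompact (closure V) := D.cpt.of_isClosed_subset isClosed_closure hVcU
  have hVb : ∀ x ∈ closure V, ‖x - z‖ ≤ r := by
    intro x hx
    have : closure V ⊆ Metric.closedBall z r := closure_minimal (fun a ha => Metric.ball_subset_closedBall (hVsub ha).2) Metric.isClosed_closedBall
    exact mem_closedBall_iff_norm.1 (this hx)
  have htay : ∀ x ∈ closure V, |Φ k x - Φ k z - inner ℝ q (x - z)| ≤ 20 * ω * r := by
    intro x hx
    refine le_on_closure (s := V) (f := fun x => |Φ k x - Φ k z - inner ℝ q (x - z)|) (g := fun _ => 20 * ω * r) ?_ ?_ continuousOn_const hx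
    · intro x hx
      refine taylor_comp D.hU (hdiff k) (D.Φc k) (D.Φ0 k) hr (fun a ha hab => ?_) hω0.le hzU hx
      exact (hmod k a (subset_closure ha) z hz (by rw [mem_ball_iff_norm] at hab; linarith)).le
    · refine ContinuousOn.abs ?_
      refine ((((D.Φc k).mono hVcU).sub continuousOn_const)).sub (by fun_prop)
  have hin : ∀ x ∈ closure V, |inner ℝ q (x - z)| ≤ L * r := fun x hx =>
    (abs_real_inner_le_norm _ _).trans (mul_le_mul hqL (hVb x hx) (norm_nonneg _) (by linarith))
  obtain ⟨x', hx', hmin⟩ := hVc.exists_isMinOn ⟨z, subset_closure hzV⟩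
    (f := fun x => u k x - (Φ k z + inner ℝ q (x - z) - K / 2 * ‖x - z‖^2))
    (((S.cont k).mono hVcU).sub (by fun_prop))
  have hmin' : ∀ x ∈ closure V, u k x' - (Φ k z + inner ℝ q (x' - z) - K / 2 * ‖x' - z‖^2)
      ≤ u k x - (Φ k z + inner ℝ q (x - z) - K / 2 * ‖x - z‖^2) := fun x hx => hmin hx
  have hwz : u k x' - (Φ k z + inner ℝ q (x' - z) - K / 2 * ‖x' - z‖^2) ≤ m := by
    have := hmin' z (subset_closure hzV)
    simp at this ⊢; linarith
  have hKp : 0 ≤ K / 2 * ‖x' - z‖^2 := by positivity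
  have hin' := abs_le.1 (hin x' hx')
  have hΦz' := abs_le.1 hΦz
  have hx'U : x' ∈ U := by
    by_contra hn
    rw [S.bdry k x' (mem_frontier_of D.hU (hVcU hx') hn)] at hwz
    linarith
  have hx'b : ‖x' - z‖ < r := by
    rcases (hVb x' hx').lt_or_eq with h | h
    · exact h
    · exfalso
      have h1 := hge k x' (hVcU hx')
      have h2 := (abs_le.1 (htay x' hx')).1
      rw [h] at hwz
      have h3 : K / 2 * r^2 = 25 * (ω * r) := by
        calc K / 2 * r^2 = (K * r) * r / 2 := by ring
          _ = _ := by rw [hKr]; ring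
      have h4 : 0 < ω * r := by positivity
      linarith
  have hx'V : x' ∈ V := by
    have hpre : IsPreconnected (insert x' V) :=
      isPreconnected_connectedComponentIn.subset_closure (subset_insert _ _)
        (insert_subset hx' subset_closure)
    have := hpre.subset_connectedComponentIn (mem_insert_of_mem x' hzV) (F := U ∩ Metric.ball z r)
      (insert_subset ⟨hx'U, mem_ball_iff_norm.2 hx'b⟩ hVsub)
    exact this (mem_insert _ _)
  obtain ⟨hg, hl⟩ := min_test D.hU (S.c2 k) (p := q - K • (x' - z)) (k := K) hx'U (hVo.mem_nhds hx'V) (fun a ha => by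
    have h1 := hmin' a (subset_closure ha)
    have h2 : ‖a - z‖^2 = ‖x' - z‖^2 + 2 * inner ℝ (x' - z) (a - x') + ‖a - x'‖^2 := by
      rw [← norm_add_sq_real]; congr 2; abel
    have h3 : inner ℝ q (a - z) = inner ℝ q (x' - z) + inner ℝ q (a - x') := by
      rw [← inner_add_right]; congr 1; abel
    rw [h2, h3] at h1
    rw [inner_sub_left, inner_smul_left]
    simp only [conj_trivial]
    linarith)
  have hp := S.pde k x' hx'U
  have hx'c := hVcU hx'
  have hKx : ‖K • (x' - z)‖ ≤ 50 * ω := by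
    rw [norm_smul, Real.norm_of_nonneg hK0.le, ← hKr]; gcongr
  have hΦ' : |Φ (!k) x'| ≤ L * (2 * r) := by
    refine (hlipb (!k) x' hx'U).trans ?_
    gcongr
    calc ‖x' - y‖ = ‖(x' - z) + (z - y)‖ := by congr 1; abel
      _ ≤ _ := norm_add_le _ _
      _ ≤ 2 * r := by linarith
  have hΦ'' := abs_le.1 hΦ'
  have hgam : γ ((u k x' - u (!k) x' - ψ k x') / ε) = 0 := by
    refine D.γ0 _ (div_nonpos_of_nonpos_of_nonneg ?_ hε.le)
    have h1 := hge (!k) x' hx'c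
    have h2 := D.ψα k x' hx'c
    linarith
  have hHH := hHu k x' hx'c z hz (q - K • (x' - z)) q (by
    calc _ ≤ ‖q‖ + ‖K • (x' - z)‖ := norm_sub_le _ _
      _ ≤ L + 1 := by linarith) (by linarith) (by linarith) (by
    rw [sub_sub_cancel_left, norm_neg]; linarith)
  have hHH' := (abs_lt.1 hHH).2
  rw [hg, hgam] at hp
  have h5 : -(ε * (n * K)) ≤ ε * lap (u k) x' := by
    rw [← mul_neg]; gcongr
  linarith [hsub k z hz]

end S18

namespace S18
open Topology

variable {n : ℕ} {U : Set (EE n)} {H : Bool → EE n → EE n → ℝ} {ψ Φ : Bool → EE n → ℝ}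
    {γ : ℝ → ℝ} {α Cb : ℝ}

theorem contact (D : Data U H ψ Φ γ α Cb) : ∃ d0 > 0, ∃ ε0 > 0, ∀ ε > 0, ε < ε0 →
    ∀ u, Sol U H ψ γ ε u → ∀ j, ∀ x ∈ closure U, ψ j x ≤ u j x - u (!j) x → Metric.ball x d0 ⊆ closure U := by
  have hα := D.hα
  obtain ⟨d1, hd1, ε1, hε1, hup⟩ := upper_near D (η := α / 4) (by positivity)
  obtain ⟨ε2, hε2, hlow⟩ := lower D (η := α / 8) (by positivity)
  obtain ⟨L, hL1, hL⟩ := bound_bool D.cpt D.Φg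
  have hL0 : 0 < L := by linarith
  refine ⟨min d1 (α / (8 * L)), lt_min hd1 (by positivity), min ε1 ε2, lt_min hε1 hε2, ?_⟩
  intro ε hε hlt u S j x hx hcon c hc
  by_contra hcU
  rw [mem_ball_iff_norm, norm_sub_rev] at hc
  have h1 := hup ε hε (hlt.trans_le (min_le_left _ _)) u S x hx ⟨c, hcU, hc.trans_le (min_le_left _ _)⟩ j
  have h2 := hlow ε hε (hlt.trans_le (min_le_right _ _)) u S (!j) x hx
  have h3 : |Φ (!j) x| ≤ α / 8 := by
    by_cases hxU : x ∈ U
    · have := bdry_lip D.hU ((D.Φ2 (!j)).differentiableOn (by norm_num)) (D.Φc _) (D.Φ0 _) convex_univ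
        (fun a ha _ => hL (!j) a (subset_closure ha)) hxU (mem_univ _) (y := c) (fun h => hcU (subset_closure h)) (mem_univ _)
      refine this.trans ?_
      have h4 := (hc.trans_le (min_le_right _ _)).le
      rw [le_div_iff₀ (by positivity)] at h4
      linarith
    · rw [D.Φ0 _ x (mem_frontier_of D.hU hx hxU)]; simp; positivity
  have h5 := D.ψα j x hx
  linarith [(abs_le.1 h3).1]

noncomputable def phi (K A ε t : ℝ) : ℝ := K * t + K * A * ε * (1 - Real.exp (-t / ε))
noncomputable def dphi (K A ε t : ℝ) : ℝ := K * (1 + A * Real.exp (-t / ε))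

theorem hasDerivAt_exp (ε t : ℝ) : HasDerivAt (fun t : ℝ => Real.exp (-t / ε)) (- (1/ε) * Real.exp (-t / ε)) t := by
  have h1 : HasDerivAt (fun t : ℝ => -t / ε) (-1 / ε) t := ((hasDerivAt_id t).neg).div_const ε
  refine h1.exp.congr_deriv ?_
  ring

theorem hasDerivAt_phi {K A ε : ℝ} (hε : 0 < ε) (t : ℝ) : HasDerivAt (phi K A ε) (dphi K A ε t) t := by
  have h := ((hasDerivAt_id t).const_mul K).add (((hasDerivAt_exp ε t).const_sub 1).const_mul (K * A * ε))
  refine h.congr_deriv ?_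
  unfold dphi; field_simp

theorem hasDerivAt_dphi {K A ε : ℝ} (t : ℝ) :
    HasDerivAt (dphi K A ε) (- (K * A / ε) * Real.exp (-t / ε)) t := by
  have h := (((hasDerivAt_exp ε t).const_mul A).const_add 1).const_mul K
  refine h.congr_deriv ?_
  ring

theorem phi_concave {K A ε : ℝ} (hK : 0 ≤ K) (hA : 0 ≤ A) (hε : 0 < ε) (s t : ℝ) :
    phi K A ε s ≤ phi K A ε t + dphi K A ε t * (s - t) := by
  have h1 := Real.add_one_le_exp (-(s - t) / ε)
  have h2 : Real.exp (-s / ε) = Real.exp (-t / ε) * Real.exp (-(s - t) / ε) := by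
    rw [← Real.exp_add]; congr 1; field_simp; ring
  have h3 : Real.exp (-t / ε) * (-(s - t) / ε + 1) ≤ Real.exp (-s / ε) := by
    rw [h2]; gcongr
  have h4 := mul_le_mul_of_nonneg_left h3 (show 0 ≤ K * A * ε by positivity)
  have h5 : K * A * ε * (Real.exp (-t / ε) * (-(s - t) / ε + 1)) =
    K * A * (Real.exp (-t/ε)) * (-(s - t)) + K * A * ε * Real.exp (-t/ε) := by field_simp
  unfold phi dphi
  nlinarith

theorem phi_ge {K A ε t : ℝ} (hK : 0 ≤ K) (hA : 0 ≤ A) (hε : 0 < ε) (ht : 0 ≤ t) : K * t ≤ phi K A ε t := by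
  have : Real.exp (-t / ε) ≤ 1 := by
    rw [Real.exp_le_one_iff]; exact div_nonpos_of_nonpos_of_nonneg (by linarith) hε.le
  unfold phi
  have : 0 ≤ K * A * ε * (1 - Real.exp (-t / ε)) := mul_nonneg (by positivity) (by linarith)
  linarith

theorem phi_le {K A ε t : ℝ} (hK : 0 ≤ K) (hA : 0 ≤ A) (hε : 0 < ε) : phi K A ε t ≤ K * (1 + A) * t := by
  have := phi_concave hK hA hε t 0
  simp [phi, dphi] at this
  unfold phi; linarith

theorem phi_le' {K A ε t : ℝ} (hK : 0 ≤ K) (hA : 0 ≤ A) (hε : 0 < ε) : phi K A ε t ≤ K * t + K * A * ε := by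
  unfold phi
  have := Real.exp_pos (-t / ε)
  have : 0 ≤ K * A * ε * Real.exp (-t/ε) := by positivity
  linarith

theorem dphi_ge {K A ε t : ℝ} (hK : 0 ≤ K) (hA : 0 ≤ A) : K ≤ dphi K A ε t := by
  unfold dphi
  have : 0 ≤ A * Real.exp (-t/ε) := by positivity
  nlinarith

theorem dphi_le {K A ε t : ℝ} (hK : 0 ≤ K) (hA : 0 ≤ A) (hε : 0 < ε) (ht : 0 ≤ t) : dphi K A ε t ≤ K * (1 + A) := by
  have : Real.exp (-t / ε) ≤ 1 := by
    rw [Real.exp_le_one_iff]; exact div_nonpos_of_nonpos_of_nonneg (by linarith) hε.le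
  unfold dphi
  gcongr
  nlinarith

theorem twoside {f : EE n → ℝ} {x P : EE n} {c0 δ k : ℝ} (hδ : 0 < δ) (hd : DifferentiableAt ℝ f x) (hP : P ≠ 0)
    (hmax : ∀ᶠ x' in 𝓝 x, c0 * f x' + δ * |f x'| - (inner ℝ P (x' - x) + k / 2 * ‖x' - x‖^2) ≤ c0 * f x + δ * |f x|) :
    f x ≠ 0 ∧ ∃ c, |c - c0| ≤ δ ∧ c * f x = c0 * f x + δ * |f x| ∧ (∀ x', c * f x' ≤ c0 * f x' + δ * |f x'|) ∧
      c • gradient f x = P ∧ 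
      IsLocalMax (fun x' => c * f x' - (inner ℝ P (x' - x) + k / 2 * ‖x' - x‖^2)) x := by
  have hle1 : ∀ x', (c0 + δ) * f x' ≤ c0 * f x' + δ * |f x'| := fun x' => by nlinarith [le_abs_self (f x')]
  have hle2 : ∀ x', (c0 - δ) * f x' ≤ c0 * f x' + δ * |f x'| := fun x' => by nlinarith [neg_abs_le (f x')]
  have key : ∀ c, (∀ x', c * f x' ≤ c0 * f x' + δ * |f x'|) → c * f x = c0 * f x + δ * |f x| →
      IsLocalMax (fun x' => c * f x' - (inner ℝ P (x' - x) + k / 2 * ‖x' - x‖^2)) x := by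
    intro c h1 h2
    filter_upwards [hmax] with x' hx'
    have := h1 x'
    simp only [sub_self, inner_zero_right, norm_zero]
    rw [h2]
    linarith
  rcases lt_trichotomy (f x) 0 with h | h | h
  · have he : (c0 - δ) * f x = c0 * f x + δ * |f x| := by rw [abs_of_neg h]; ring
    refine ⟨h.ne, c0 - δ, by simp [abs_of_pos hδ], he, hle2, grad_of_max hd (key _ hle2 he), key _ hle2 he⟩
  · exfalso
    have h1 := grad_of_max hd (key _ hle1 (by simp [h]))
    have h2 := grad_of_max hd (key _ hle2 (by simp [h]))
    have h3 : (2 * δ) • gradient f x = 0 := by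
      have : (2 * δ) • gradient f x = (c0 + δ) • gradient f x - (c0 - δ) • gradient f x := by module
      rw [this, h1, h2, sub_self]
    rw [smul_eq_zero] at h3
    rcases h3 with h3 | h3
    · linarith
    · rw [h3] at h1; simp at h1; exact hP h1.symm
  · have he : (c0 + δ) * f x = c0 * f x + δ * |f x| := by rw [abs_of_pos h]; ring
    refine ⟨h.ne', c0 + δ, by simp [abs_of_pos hδ], he, hle1, grad_of_max hd (key _ hle1 he), key _ hle1 he⟩

theorem Data.gscale (D : Data U H ψ Φ γ α Cb) {μ s : ℝ} (hμ : 1 ≤ μ) : μ * γ s ≤ γ (μ * s) := by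
  have hc := D.γconv.2
  have h := @hc (μ * s) (mem_univ (μ * s)) 0 (mem_univ (0:ℝ)) (1 / μ) (1 - 1 / μ) (by positivity)
    (by rw [sub_nonneg, div_le_one (by linarith)]; exact hμ) (by ring)
  have h0 := D.γ0 0 le_rfl
  simp only [smul_eq_mul, mul_zero, add_zero, h0] at h
  have hμ0 : 0 < μ := by linarith
  rw [show 1 / μ * (μ * s) = s by field_simp] at h
  calc μ * γ s ≤ μ * (1 / μ * γ (μ * s)) := by gcongr
    _ = _ := by field_simp

end S18

namespace S18
open Topology

variable {n : ℕ} {U : Set (EE n)} {H : Bool → EE n → EE n → ℝ} {ψ Φ : Bool → EE n → ℝ}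
    {γ : ℝ → ℝ} {α Cb : ℝ}

set_option maxHeartbeats 4000000 in
theorem doubling (D : Data U H ψ Φ γ α Cb) {ε : ℝ} (hε : 0 < ε) (hε1 : ε ≤ 1) {u : Bool → EE n → ℝ}
    (S : Sol U H ψ γ ε u) {C0 : ℝ} (hC0 : 1 ≤ C0) (hu : ∀ j, ∀ x ∈ closure U, |u j x| ≤ C0)
    {a : EE n} {ρ : ℝ} (hρ : 0 < ρ) (hball : Metric.ball a (3 * ρ) ⊆ closure U)
    {K A b κ σ C1 Lψ : ℝ} (hA : 0 ≤ A) (hb : 0 ≤ b) (hκ : 0 < κ) (hκ1 : κ ≤ 1) (hσ : 0 < σ) (hσ1 : σ ≤ 1 / 4)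
    (hσ2 : 14 * σ * C0 ≤ α) (h1 : 8 * b * ρ ≤ K) (h2 : 2 * C0 ≤ K * ρ) (h3 : C0 + 2 * b < K)
    (hsup : ∀ j, ∀ x ∈ closure U, ∀ p : EE n, K / 4 ≤ ‖p‖ → 8 * n * ‖p‖ ≤ H j x p)
    (hedge : ∀ j, ∀ x y : EE n, ‖x - a‖ = ρ → ‖x - y‖ ≤ ρ → u j x - u j y - phi K A ε ‖x - y‖ ≤ b * ρ^2)
    (hHC : ∀ j, ∀ x y : EE n, ‖x - a‖ ≤ ρ → ‖x - y‖ ≤ ρ → ‖x - y‖ ≤ ε → ∀ cX cY : ℝ, |cX - 1| ≤ κ * σ →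
      |cY - (1 + κ)| ≤ κ * σ → ∀ p r : EE n, ‖p‖ ≤ K * (1 + A) → ‖r‖ ≤ 2 * b * ρ →
      - C1 ≤ cX * H j x (cX⁻¹ • (p + r)) - cY * H j y (cY⁻¹ • p))
    (hLψ : 0 ≤ Lψ) (hψ : ∀ j, ∀ x ∈ Metric.ball a (3 * ρ), ∀ y ∈ Metric.ball a (3 * ρ), |ψ j x - ψ j y| ≤ Lψ * ‖x - y‖)
    (hKA : C1 + 4 * C0 + 2 * Lψ + 2 * b * n + 1 ≤ K * A) :
    ∀ j, ∀ y : EE n, ‖a - y‖ ≤ ρ → u j a - u j y ≤ phi K A ε ‖a - y‖ + 4 * κ * C0 := by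
  have hK0 : 0 < K := by linarith
  set δ := κ * σ with hδd
  have hδ : 0 < δ := by positivity
  have hδ1 : δ ≤ κ / 4 := by rw [hδd]; nlinarith
  set dom : Set (EE n × EE n) := {q | ‖q.1 - a‖ ≤ ρ ∧ ‖q.1 - q.2‖ ≤ ρ} with hdom
  have hb1 : ∀ x : EE n, ‖x - a‖ ≤ ρ → x ∈ Metric.ball a (3 * ρ) := fun x hx => mem_ball_iff_norm.2 (by linarith)
  have hb2 : ∀ x y : EE n, ‖x - a‖ ≤ ρ → ‖x - y‖ ≤ ρ → y ∈ Metric.ball a (3 * ρ) := fun x y hx hy => by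
    rw [mem_ball_iff_norm]
    calc ‖y - a‖ = ‖(x - a) - (x - y)‖ := by congr 1; abel
      _ ≤ ‖x - a‖ + ‖x - y‖ := norm_sub_le _ _
      _ < 3 * ρ := by linarith
  have hdc : IsCompact dom := by
    have hK : IsCompact (Metric.closedBall a ρ ×ˢ Metric.closedBall a (3 * ρ)) :=
      (isCompact_closedBall _ _).prod (isCompact_closedBall _ _)
    refine hK.of_isClosed_subset ?_ ?_
    · have c1 : IsClosed {q : EE n × EE n | ‖q.1 - a‖ ≤ ρ} :=
        isClosed_le (show Continuous (fun q : EE n × EE n => ‖q.1 - a‖) by fun_prop) continuous_const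
      have c2 : IsClosed {q : EE n × EE n | ‖q.1 - q.2‖ ≤ ρ} :=
        isClosed_le (show Continuous (fun q : EE n × EE n => ‖q.1 - q.2‖) by fun_prop) continuous_const
      exact c1.inter c2
    · rintro ⟨x, y⟩ ⟨hx, hy⟩
      exact ⟨mem_closedBall_iff_norm.2 hx, Metric.ball_subset_closedBall (hb2 x y hx hy)⟩
  set F : Bool → EE n × EE n → ℝ := fun j q => (1 * u j q.1 + δ * |u j q.1|) + (-(1 + κ) * u j q.2 + δ * |u j q.2|)
    - phi K A ε ‖q.1 - q.2‖ - b * ‖q.1 - a‖^2 with hF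
  have hphic : Continuous (phi K A ε) := continuous_iff_continuousAt.2 fun t => (hasDerivAt_phi hε t).continuousAt
  have hFc : ∀ j, ContinuousOn (F j) dom := by
    intro j
    have c1 : ContinuousOn (fun q : EE n × EE n => u j q.1) dom :=
      (S.cont j).comp continuousOn_fst (fun q hq => hball (hb1 q.1 hq.1))
    have c2 : ContinuousOn (fun q : EE n × EE n => u j q.2) dom :=
      (S.cont j).comp continuousOn_snd (fun q hq => hball (hb2 q.1 q.2 hq.1 hq.2))
    have c3 : Continuous (fun q : EE n × EE n => phi K A ε ‖q.1 - q.2‖) := hphic.comp (by fun_prop)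
    have c4 := c3.continuousOn (s := dom)
    have c5 : Continuous (fun q : EE n × EE n => b * ‖q.1 - a‖^2) := by fun_prop
    exact ((((continuousOn_const.mul c1).add (continuousOn_const.mul c1.abs)).add
      ((continuousOn_const.mul c2).add (continuousOn_const.mul c2.abs))).sub c4).sub c5.continuousOn
  obtain ⟨j, ⟨x, y⟩, ⟨hxa, hxy⟩, hmax⟩ := exists_max_bool hdc ⟨(a, a), by simp [hdom, hρ.le]⟩ hFc
  simp only at hxa hxy
  suffices hM : F j (x, y) ≤ (κ + 2 * δ) * C0 by
    intro k w hw
    have h4 := (hmax k (a, w) ⟨by simp [hρ.le], hw⟩).trans hM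
    have h5 := abs_le.1 (hu k a (hball (hb1 a (by simp [hρ.le]))))
    have h6 := abs_le.1 (hu k w (hball (hb2 a w (by simp [hρ.le]) hw)))
    simp only [hF, sub_self, norm_zero] at h4
    have h7 : 0 ≤ δ * |u k a| := by positivity
    have h8 : 0 ≤ δ * |u k w| := by positivity
    have h9 : κ * u k w ≤ κ * C0 := by gcongr; exact h6.2
    have h10 : 2 * δ * C0 ≤ κ * C0 := by gcongr; linarith
    nlinarith
  by_contra hM
  push Not at hM
  have hxc := hball (hb1 x hxa)
  have hyc := hball (hb2 x y hxa hxy)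
  have hux := abs_le.1 (hu j x hxc)
  have huy := abs_le.1 (hu j y hyc)
  have e1 : δ * |u j x| ≤ δ * C0 := by gcongr; exact hu j x hxc
  have e2 : δ * |u j y| ≤ δ * C0 := by gcongr; exact hu j y hyc
  have e3 : -(κ * u j y) ≤ κ * C0 := by nlinarith
  have e4 : 0 ≤ b * ‖x - a‖^2 := by positivity
  have hM' : (κ + 2 * δ) * C0 < (1 * u j x + δ * |u j x|) + (-(1 + κ) * u j y + δ * |u j y|)
    - phi K A ε ‖x - y‖ - b * ‖x - a‖^2 := hM
  have ht0 : 0 < ‖x - y‖ := by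
    rw [norm_pos_iff, sub_ne_zero]
    intro h
    rw [← h] at hM' e2 e3
    simp [phi] at hM'
    linarith
  have hxa' : ‖x - a‖ < ρ := by
    rcases hxa.lt_or_eq with h | h
    · exact h
    · exfalso
      have := hedge j x y h hxy
      rw [h] at hM'
      linarith
  have hxy' : ‖x - y‖ < ρ := by
    rcases hxy.lt_or_eq with h | h
    · exact h
    · exfalso
      have h5 := phi_ge (K := K) (A := A) (ε := ε) hK0.le hA hε (norm_nonneg (x - y))
      rw [h] at h5 hM'
      linarith
  set t0 := ‖x - y‖ with ht0d
  set d := dphi K A ε t0 with hd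
  have hdK : K ≤ d := dphi_ge hK0.le hA
  have hdK2 : d ≤ K * (1 + A) := dphi_le hK0.le hA hε ht0.le
  have hd0 : 0 < d := by linarith
  set p : EE n := (d * t0⁻¹) • (x - y) with hp
  set r : EE n := (2 * b) • (x - a) with hr
  have hpn : ‖p‖ = d := by
    rw [hp, norm_smul, Real.norm_of_nonneg (by positivity), ← ht0d]; field_simp
  have hrn : ‖r‖ ≤ 2 * b * ρ := by
    rw [hr, norm_smul, Real.norm_of_nonneg (by positivity)]; gcongr
  have hPn : 3 / 4 * d ≤ ‖p + r‖ := by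
    have := norm_sub_le (p + r) r
    rw [add_sub_cancel_right, hpn] at this
    linarith
  have hP0 : p + r ≠ 0 := by
    intro h; rw [h, norm_zero] at hPn; linarith
  have hp0 : p ≠ 0 := by
    intro h; rw [h, norm_zero] at hpn; linarith
  have hphimaj : ∀ h : EE n, phi K A ε ‖(x - y) + h‖ ≤ phi K A ε t0 + (inner ℝ p h + d * t0⁻¹ / 2 * ‖h‖^2) := by
    intro h
    have h5 := phi_concave hK0.le hA hε ‖(x - y) + h‖ t0
    have h6 := norm_maj ht0 h
    have h7 := mul_le_mul_of_nonneg_left (sub_le_iff_le_add'.2 h6) hd0.le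
    rw [hp, mul_smul, inner_smul_left]
    simp only [conj_trivial]
    rw [← ht0d] at h7
    linarith
  have hUi : ∀ w ∈ Metric.ball a (3 * ρ), w ∈ interior (closure U) := fun w hw =>
    mem_interior.2 ⟨_, hball, Metric.isOpen_ball, hw⟩
  have hdx : ∀ w ∈ Metric.ball a (3 * ρ), DifferentiableAt ℝ (u j) w := fun w hw =>
    diff_interior D.hU ((S.c2 j).differentiableOn (by norm_num)) (S.cont j) (S.bdry j) (S.grad j) (hUi w hw)
  have hmaxF : ∀ q ∈ dom, F j q ≤ F j (x, y) := fun q hq => hmax j q hq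
  obtain ⟨hux0, cX, hcX, hcXe, hcXle, hcXg, hcXmax⟩ := twoside (c0 := 1) (k := d * t0⁻¹ + 2 * b) hδ (hdx x (hb1 x hxa)) hP0 (by
    have hn1 : ∀ᶠ x' in 𝓝 x, ‖x' - a‖ < ρ :=
      (show Continuous (fun x' : EE n => ‖x' - a‖) by fun_prop).continuousAt.eventually_lt continuousAt_const hxa'
    have hn2 : ∀ᶠ x' in 𝓝 x, ‖x' - y‖ < ρ :=
      (show Continuous (fun x' : EE n => ‖x' - y‖) by fun_prop).continuousAt.eventually_lt continuousAt_const hxy'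
    filter_upwards [hn1, hn2] with x' g1 g2
    have h5 := hmaxF (x', y) ⟨g1.le, g2.le⟩
    simp only [hF] at h5
    have h6 := hphimaj (x' - x)
    rw [show x - y + (x' - x) = x' - y by abel] at h6
    have h7 : ‖x' - a‖^2 = ‖x - a‖^2 + 2 * inner ℝ (x - a) (x' - x) + ‖x' - x‖^2 := by
      rw [← norm_add_sq_real]; congr 2; abel
    rw [h7] at h5
    have hri : inner ℝ r (x' - x) = 2 * b * inner ℝ (x - a) (x' - x) := by rw [hr, inner_smul_left]; simp
    rw [inner_add_left, hri]
    rw [← ht0d] at h5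
    linarith)
  obtain ⟨huy0, cY', hcY', hcYe', hcYle', hcYg', -⟩ := twoside (c0 := -(1 + κ)) (k := d * t0⁻¹) (P := -p) hδ (hdx y (hb2 x y hxa hxy)) (by simpa using hp0) (by
    have hn2 : ∀ᶠ y' in 𝓝 y, ‖x - y'‖ < ρ :=
      (show Continuous (fun y' : EE n => ‖x - y'‖) by fun_prop).continuousAt.eventually_lt continuousAt_const hxy'
    filter_upwards [hn2] with y' g2
    have h5 := hmaxF (x, y') ⟨hxa, g2.le⟩
    simp only [hF] at h5
    have h6 := hphimaj (-(y' - y))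
    rw [show x - y + -(y' - y) = x - y' by abel, inner_neg_right, norm_neg] at h6
    rw [inner_neg_left]
    linarith)
  obtain ⟨cY, rfl⟩ : ∃ cY, cY' = -cY := ⟨-cY', by simp⟩
  have hcY : |cY - (1 + κ)| ≤ δ := by
    rw [← abs_neg]; convert hcY' using 2; ring
  have hcYg : cY • gradient (u j) y = p := by
    rw [neg_smul] at hcYg'; exact neg_injective hcYg'
  have hcXb := abs_le.1 hcX
  have hcYb := abs_le.1 hcY
  have hcX0 : 0 < cX := by linarith
  have hcY0 : 0 < cY := by linarith
  have hxU : x ∈ U := by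
    by_contra hn; exact hux0 (S.bdry j x (mem_frontier_of D.hU hxc hn))
  have hyU : y ∈ U := by
    by_contra hn; exact huy0 (S.bdry j y (mem_frontier_of D.hU hyc hn))
  have hgx : gradient (u j) x = cX⁻¹ • (p + r) := by rw [← hcXg, inv_smul_smul₀ hcX0.ne']
  have hgy : gradient (u j) y = cY⁻¹ • p := by rw [← hcYg, inv_smul_smul₀ hcY0.ne']
  have hpx := S.pde j x hxU
  have hpy := S.pde j y hyU
  rw [hgx] at hpx
  rw [hgy] at hpy
  have hn2 : (2:ℝ) ≤ n := by exact_mod_cast D.hn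
  rcases le_total ε t0 with hcase | hcase
  · -- far case
    have hl := lap_of_max D.hU (S.c2 j) hxU hcXmax
    have hnorm : ‖cX⁻¹ • (p + r)‖ = cX⁻¹ * ‖p + r‖ := by
      rw [norm_smul, Real.norm_of_nonneg (by positivity)]
    have hge : K / 4 ≤ cX⁻¹ * ‖p + r‖ := by
      rw [inv_mul_eq_div, le_div_iff₀ hcX0]
      have : K / 4 * cX ≤ K / 4 * 2 := by gcongr; linarith
      linarith
    have hH := hsup j x hxc (cX⁻¹ • (p + r)) (by rw [hnorm]; exact hge)
    rw [hnorm] at hH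
    have hgn := D.γnn ((u j x - u (!j) x - ψ j x) / ε)
    have f1 : cX * (8 * n * (cX⁻¹ * ‖p + r‖)) = 8 * n * ‖p + r‖ := by field_simp
    have f2 : cX * (8 * n * (cX⁻¹ * ‖p + r‖)) ≤ cX * (ε * lap (u j) x + C0) := by
      gcongr; linarith
    have f3 : cX * C0 ≤ 2 * C0 := by gcongr; linarith
    have f4 : ε * (cX * lap (u j) x) ≤ n * d + 2 * b * n := by
      have g1 : ε * t0⁻¹ ≤ 1 := by rw [← div_eq_mul_inv, div_le_one ht0]; exact hcase
      calc ε * (cX * lap (u j) x) ≤ ε * (n * (d * t0⁻¹ + 2 * b)) := by gcongr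
        _ = n * d * (ε * t0⁻¹) + 2 * b * n * ε := by ring
        _ ≤ n * d * 1 + 2 * b * n * 1 := by gcongr
        _ = _ := by ring
    have f5 : 8 * n * (3 / 4 * d) ≤ 8 * n * ‖p + r‖ := by gcongr
    have f6 : 5 * n * d ≤ 2 * b * n + 2 * C0 := by linarith
    have f7 : 5 * n * (C0 + 2 * b) ≤ 5 * n * d := by gcongr; linarith
    have f8 : 2 * C0 ≤ n * C0 := by gcongr
    have f9 : 0 ≤ b * n := by positivity
    linarith
  · -- near case
    set z : EE n := t0⁻¹ • (x - y) with hz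
    have hzn : ‖z‖ = 1 := by
      rw [hz, norm_smul, Real.norm_of_nonneg (by positivity), ← ht0d]; field_simp
    have hxyz : x - y = t0 • z := by rw [hz, smul_inv_smul₀ ht0.ne']
    have hlap : cX * lap (u j) x - cY * lap (u j) y ≤ 4 * (- (K * A / ε) * Real.exp (-t0 / ε)) + 2 * b * n := by
      rw [lap_eq D.hU (S.c2 j) hxU, lap_eq D.hU (S.c2 j) hyU, ← reflect_trace (B2 (u j) y) z hzn, Finset.mul_sum, Finset.mul_sum,
        ← Finset.sum_sub_distrib]
      have hzs : ∑ i : Fin n, z i ^ 2 = 1 := by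
        have := EuclideanSpace.norm_sq_eq z
        rw [hzn] at this
        simpa using this.symm
      have hi : ∀ i : Fin n, cX * B2 (u j) x (EuclideanSpace.single i 1) (EuclideanSpace.single i 1) -
          cY * B2 (u j) y (EuclideanSpace.single i 1 - (2 * z i) • z) (EuclideanSpace.single i 1 - (2 * z i) • z) ≤
          z i ^ 2 * (4 * (- (K * A / ε) * Real.exp (-t0 / ε))) + 2 * b := by
        intro i
        set e : EE n := EuclideanSpace.single i 1 with he
        have hen : ‖e‖ = 1 := by simp [he]
        refine second_two D.hU (S.c2 j) (S.c2 j) hxU hyU _ _ cX cY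
          (m := fun t => phi K A ε (t0 + 2 * z i * t) + b * (‖x - a‖^2 + 2 * inner ℝ (x - a) e * t + t^2))
          (m' := fun t => (2 * z i) * dphi K A ε (t0 + 2 * z i * t) + b * (2 * inner ℝ (x - a) e + 2 * t)) ?_ ?_ ?_
        · refine Eventually.of_forall fun t => ?_
          have g1 : HasDerivAt (fun t : ℝ => t0 + 2 * z i * t) (2 * z i) t := by
            simpa using ((hasDerivAt_id t).const_mul (2 * z i)).const_add t0
          have g2 := (hasDerivAt_phi (K := K) (A := A) hε (t0 + 2 * z i * t)).comp t g1
          have g3 : HasDerivAt (fun t : ℝ => b * (‖x - a‖^2 + 2 * inner ℝ (x - a) e * t + t^2)) (b * (2 * inner ℝ (x - a) e + 2 * t)) t := by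
            have := ((((hasDerivAt_id t).const_mul (2 * inner ℝ (x - a) e)).const_add (‖x - a‖^2)).add ((hasDerivAt_id t).pow 2)).const_mul b
            refine this.congr_deriv ?_
            simp
          refine (g2.add g3).congr_deriv ?_
          ring
        · have g1 : HasDerivAt (fun t : ℝ => t0 + 2 * z i * t) (2 * z i) 0 := by
            simpa using ((hasDerivAt_id (0:ℝ)).const_mul (2 * z i)).const_add t0
          have g2 := ((hasDerivAt_dphi (K := K) (A := A) (ε := ε) (t0 + 2 * z i * 0)).comp 0 g1).const_mul (2 * z i)
          have g3 : HasDerivAt (fun t : ℝ => b * (2 * inner ℝ (x - a) e + 2 * t)) (b * 2) 0 := by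
            simpa using (((hasDerivAt_id (0:ℝ)).const_mul 2).const_add (2 * inner ℝ (x - a) e)).const_mul b
          refine (g2.add g3).congr_deriv ?_
          simp
          ring
        · have hn1 : ∀ᶠ t in 𝓝 (0:ℝ), ‖x + t • e - a‖ < ρ :=
            (show Continuous (fun t : ℝ => ‖x + t • e - a‖) by fun_prop).continuousAt.eventually_lt continuousAt_const (by simpa using hxa')
          have hn2 : ∀ᶠ t in 𝓝 (0:ℝ), t0 + 2 * z i * t < ρ :=
            (show Continuous (fun t : ℝ => t0 + 2 * z i * t) by fun_prop).continuousAt.eventually_lt continuousAt_const (by simpa using hxy')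
          have hn3 : ∀ᶠ t in 𝓝 (0:ℝ), 0 < t0 + 2 * z i * t :=
            continuousAt_const.eventually_lt (show Continuous (fun t : ℝ => t0 + 2 * z i * t) by fun_prop).continuousAt (by simpa using ht0)
          filter_upwards [hn1, hn2, hn3] with t g1 g2 g3
          have g4 : ‖(x + t • e) - (y + t • (e - (2 * z i) • z))‖ = t0 + 2 * z i * t := by
            rw [show (x + t • e) - (y + t • (e - (2 * z i) • z)) = (x - y) + (2 * z i * t) • z by module, hxyz, ← add_smul,
              norm_smul, hzn, Real.norm_of_nonneg g3.le, mul_one]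
          have g5 := hmaxF (x + t • e, y + t • (e - (2 * z i) • z)) ⟨g1.le, by simp only; rw [g4]; exact g2.le⟩
          simp only [hF] at g5
          rw [g4] at g5
          have g6 : ‖x + t • e - a‖^2 = ‖x - a‖^2 + 2 * inner ℝ (x - a) e * t + t^2 := by
            rw [show x + t • e - a = (x - a) + t • e by abel, norm_add_sq_real, inner_smul_right, norm_smul, hen, Real.norm_eq_abs, mul_one, sq_abs]
            ring
          rw [g6] at g5
          have g7 := hcXle (x + t • e)
          have g8 := hcYle' (y + t • (e - (2 * z i) • z))
          simp only [zero_smul, add_zero, mul_zero]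
          linarith
      refine (Finset.sum_le_sum fun i _ => hi i).trans (le_of_eq ?_)
      rw [Finset.sum_add_distrib, ← Finset.sum_mul, hzs]
      simp; ring
    have hexp : 1 / 3 ≤ Real.exp (-t0 / ε) := by
      have g1 : Real.exp (-1) ≤ Real.exp (-t0 / ε) := by
        apply Real.exp_le_exp.2
        rw [neg_div, neg_le_neg_iff, div_le_one hε]; exact hcase
      refine le_trans ?_ g1
      rw [Real.exp_neg, one_div]
      exact inv_anti₀ (Real.exp_pos 1) Real.exp_one_lt_three.le
    have hKA0 : 0 ≤ K * A := by positivity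
    have hT : cX * (ε * lap (u j) x) - cY * (ε * lap (u j) y) ≤ - (4 / 3) * (K * A) + 2 * b * n := by
      calc cX * (ε * lap (u j) x) - cY * (ε * lap (u j) y) = ε * (cX * lap (u j) x - cY * lap (u j) y) := by ring
        _ ≤ ε * (4 * (- (K * A / ε) * Real.exp (-t0 / ε)) + 2 * b * n) := by gcongr
        _ = - 4 * (K * A) * Real.exp (-t0 / ε) + 2 * b * n * ε := by field_simp
        _ ≤ - (4 / 3) * (K * A) + 2 * b * n * 1 := by
            have : 2 * b * n * ε ≤ 2 * b * n * 1 := by gcongr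
            have := mul_le_mul_of_nonneg_left hexp hKA0
            linarith
        _ = _ := by ring
    have hHc := hHC j x y hxa hxy hcase cX cY hcX hcY p r (by rw [hpn]; exact hdK2) hrn
    have hψxy := abs_le.1 (hψ j x (hb1 x hxa) y (hb2 x y hxa hxy))
    have hvx := abs_le.1 (hu (!j) x hxc)
    have hvy := abs_le.1 (hu (!j) y hyc)
    have hθ : cY * (u j y - u (!j) y - ψ j y) - cX * (Lψ * t0) ≤ cX * (u j x - u (!j) x - ψ j x) := by
      have g1 := hmax (!j) (x, y) ⟨hxa, hxy⟩
      simp only [hF] at g1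
      have g2 : (0:ℝ) ≤ δ * |u (!j) x| := by positivity
      have g3 : (0:ℝ) ≤ δ * |u (!j) y| := by positivity
      have g4 : (cX - 1) * u (!j) x ≤ δ * C0 := by
        calc (cX - 1) * u (!j) x ≤ |(cX - 1) * u (!j) x| := le_abs_self _
          _ = |cX - 1| * |u (!j) x| := abs_mul _ _
          _ ≤ δ * C0 := mul_le_mul hcX (hu (!j) x hxc) (abs_nonneg _) hδ.le
      have g5 : -((cY - (1 + κ)) * u (!j) y) ≤ δ * C0 := by
        calc -((cY - (1 + κ)) * u (!j) y) ≤ |(cY - (1 + κ)) * u (!j) y| := neg_le_abs _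
          _ = |cY - (1 + κ)| * |u (!j) y| := abs_mul _ _
          _ ≤ δ * C0 := mul_le_mul hcY (hu (!j) y hyc) (abs_nonneg _) hδ.le
      have g6 : (κ - 2 * δ) * α ≤ (cY - cX) * ψ j y := by
        have := D.ψα j y hyc
        exact mul_le_mul (by linarith) this D.hα.le (by linarith)
      have g7 : 2 * δ * C0 ≤ (κ - 2 * δ) * α := by
        have : κ / 2 * α ≤ (κ - 2 * δ) * α := by
          have := D.hα
          gcongr; linarith
        have : 14 * δ * C0 ≤ κ * α := by
          calc 14 * δ * C0 = κ * (14 * σ * C0) := by rw [hδd]; ring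
            _ ≤ κ * α := by gcongr
        have : 0 ≤ δ * C0 := by positivity
        linarith
      have g8 : cX * (ψ j x - ψ j y) ≤ cX * (Lψ * t0) := by gcongr; exact hψxy.2
      linarith
    set μ := cY / cX with hμ
    have hμ1 : 1 ≤ μ := by rw [hμ, le_div_iff₀ hcX0]; linarith
    have hγ : cY * γ ((u j y - u (!j) y - ψ j y) / ε) - 2 * Lψ ≤ cX * γ ((u j x - u (!j) x - ψ j x) / ε) := by
      have g1 : μ * ((u j y - u (!j) y - ψ j y) / ε) - Lψ ≤ (u j x - u (!j) x - ψ j x) / ε := by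
        rw [le_div_iff₀ hε]
        have : μ * (u j y - u (!j) y - ψ j y) - Lψ * t0 ≤ (u j x - u (!j) x - ψ j x) := by
          rw [hμ, div_mul_eq_mul_div, div_sub' hcX0.ne', div_le_iff₀ hcX0]; linarith
        have g2 : Lψ * t0 ≤ Lψ * ε := by gcongr
        have g3 : (μ * ((u j y - u (!j) y - ψ j y) / ε) - Lψ) * ε = μ * (u j y - u (!j) y - ψ j y) - Lψ * ε := by field_simp
        linarith
      have g2 := D.mono g1
      have g3 := D.lip (show μ * ((u j y - u (!j) y - ψ j y) / ε) - Lψ ≤ μ * ((u j y - u (!j) y - ψ j y) / ε) by linarith)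
      have g4 := D.gscale (s := (u j y - u (!j) y - ψ j y) / ε) hμ1
      have g5 : μ * γ ((u j y - u (!j) y - ψ j y) / ε) - Lψ ≤ γ ((u j x - u (!j) x - ψ j x) / ε) := by linarith
      have g6 := mul_le_mul_of_nonneg_left g5 hcX0.le
      have g7 : cX * (μ * γ ((u j y - u (!j) y - ψ j y) / ε) - Lψ) = cY * γ ((u j y - u (!j) y - ψ j y) / ε) - cX * Lψ := by
        rw [hμ]; field_simp
      have g8 : cX * Lψ ≤ 2 * Lψ := by gcongr; linarith
      linarith
    have hul : -(4 * C0) ≤ cX * u j x - cY * u j y := by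
      have g1 : -(cX * C0) ≤ cX * u j x := by rw [← mul_neg]; gcongr; exact hux.1
      have g2 : cY * u j y ≤ cY * C0 := by gcongr; exact huy.2
      have g3 : (cX + cY) * C0 ≤ 4 * C0 := by gcongr; linarith
      linarith
    have hfin : cX * (ε * lap (u j) x) - cY * (ε * lap (u j) y) =
      (cX * u j x - cY * u j y) + (cX * H j x (cX⁻¹ • (p + r)) - cY * H j y (cY⁻¹ • p)) +
      (cX * γ ((u j x - u (!j) x - ψ j x) / ε) - cY * γ ((u j y - u (!j) y - ψ j y) / ε)) := by
      rw [← hpx, ← hpy]; ring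
    linarith

end S18

namespace S18
open Topology

variable {n : ℕ} {U : Set (EE n)} {H : Bool → EE n → EE n → ℝ} {ψ Φ : Bool → EE n → ℝ}
    {γ : ℝ → ℝ} {α Cb : ℝ}

theorem Data.ψlip (D : Data U H ψ Φ γ α Cb) : ∃ L, 0 ≤ L ∧ ∀ j, ∀ a : EE n, ∀ r, Metric.ball a r ⊆ closure U →
    ∀ x ∈ Metric.ball a r, ∀ y ∈ Metric.ball a r, |ψ j x - ψ j y| ≤ L * ‖x - y‖ := by
  obtain ⟨L, hL, hb⟩ := bound_bool D.cpt (f := fun j x => fderiv ℝ (ψ j) x)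
    (fun j => ((D.hψ j).continuous_fderiv (by simp)).continuousOn)
  refine ⟨L, by linarith, fun j a r hs x hx y hy => ?_⟩
  have := (convex_ball a r).norm_image_sub_le_of_norm_fderiv_le (𝕜 := ℝ) (f := ψ j) (C := L)
    (fun z _ => ((D.hψ j).differentiable (by simp)) z) (fun z hz => hb j z (hs hz)) hy hx
  simpa using this

theorem Data.Hlipx (D : Data U H ψ Φ γ α Cb) (j : Bool) {a : EE n} {r : ℝ} (hs : Metric.ball a r ⊆ closure U)
    (p : EE n) {x y : EE n} (hx : x ∈ Metric.ball a r) (hy : y ∈ Metric.ball a r) :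
    |H j x p - H j y p| ≤ Cb * ‖x - y‖ := by
  have hd : Differentiable ℝ (fun z => H j z p) := by
    have h1 : Differentiable ℝ (fun q : EE n × EE n => H j q.1 q.2) := (D.hH j).differentiable (by simp)
    exact h1.comp (show Differentiable ℝ (fun z : EE n => (z, p)) by fun_prop)
  have := (convex_ball a r).norm_image_sub_le_of_norm_fderiv_le (𝕜 := ℝ) (f := fun z => H j z p) (C := Cb)
    (fun z _ => hd z) (fun z hz => by
      have := D.dx j z (hs hz) p
      rwa [gradient, LinearIsometryEquiv.norm_map] at this) hy hx
  simpa using this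

theorem Data.Hscale (D : Data U H ψ Φ γ α Cb) (j : Bool) {y : EE n} (hy : y ∈ closure U) {cX cY M R : ℝ}
    (hX : 0 < cX) (hXY : cX < cY) (p r : EE n) (hM : ∀ q : EE n, ‖q‖ ≤ R → |H j y q| ≤ M)
    (hr : ‖r‖ ≤ (cY - cX) * R) :
    cY * H j y (cY⁻¹ • p) ≤ cX * H j y (cX⁻¹ • (p + r)) + (cY - cX) * M := by
  have hY : 0 < cY := hX.trans hXY
  have hd : 0 < cY - cX := by linarith
  have hc := (D.conv j y hy).2 (mem_univ (cX⁻¹ • (p + r))) (mem_univ (-(cY - cX)⁻¹ • r))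
    (show 0 ≤ cX / cY by positivity) (show 0 ≤ (cY - cX) / cY by positivity) (by field_simp; ring)
  have he : (cX / cY) • (cX⁻¹ • (p + r)) + ((cY - cX) / cY) • (-(cY - cX)⁻¹ • r) = cY⁻¹ • p := by
    rw [smul_smul, smul_smul, show cX / cY * cX⁻¹ = cY⁻¹ by field_simp,
      show (cY - cX) / cY * -(cY - cX)⁻¹ = - cY⁻¹ by field_simp]
    module
  rw [he] at hc
  have hq := (abs_le.1 (hM (-(cY - cX)⁻¹ • r) (by
    rw [norm_smul, norm_neg, norm_inv, Real.norm_of_nonneg hd.le, inv_mul_le_iff₀ hd]; exact hr))).2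
  simp only [smul_eq_mul] at hc
  have h2 := mul_le_mul_of_nonneg_left hc hY.le
  have h3 : cY * (cX / cY * H j y (cX⁻¹ • (p + r)) + (cY - cX) / cY * H j y (-(cY - cX)⁻¹ • r)) =
    cX * H j y (cX⁻¹ • (p + r)) + (cY - cX) * H j y (-(cY - cX)⁻¹ • r) := by field_simp
  rw [h3] at h2
  have h4 := mul_le_mul_of_nonneg_left hq hd.le
  linarith

theorem pass1 (D : Data U H ψ Φ γ α Cb) {C0 : ℝ} (hC0 : 1 ≤ C0)
    (hC : ∀ ε > 0, ∀ u, Sol U H ψ γ ε u → ∀ j, ∀ x ∈ closure U, |u j x| ≤ C0)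
    {ρ K b : ℝ} (hρ : 0 < ρ) (hb : b * ρ^2 = 2 * C0) (h1 : 8 * b * ρ ≤ K) (h2 : 2 * C0 ≤ K * ρ)
    (h3 : C0 + 2 * b < K)
    (hsup : ∀ j, ∀ x ∈ closure U, ∀ p : EE n, K / 4 ≤ ‖p‖ → 8 * n * ‖p‖ ≤ H j x p) {η : ℝ} (hη : 0 < η) :
    ∃ ε0 > 0, ∀ ε > 0, ε < ε0 → ∀ u, Sol U H ψ γ ε u → ∀ a, Metric.ball a (3 * ρ) ⊆ closure U →
      ∀ j, ∀ y, ‖a - y‖ ≤ ρ → u j a - u j y ≤ K * ‖a - y‖ + η := by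
  have hb0 : 0 ≤ b := by
    by_contra h
    push Not at h
    have : b * ρ^2 < 0 := mul_neg_of_neg_of_pos h (by positivity)
    linarith
  have hK0 : 0 < K := by linarith
  obtain ⟨L, hL, hψ⟩ := D.ψlip
  set κ := min 1 (η / (8 * C0)) with hκd
  have hκ : 0 < κ := lt_min one_pos (by positivity)
  have hκ1 : κ ≤ 1 := min_le_left _ _
  have hκ2 : 4 * κ * C0 ≤ η / 2 := by
    have : κ ≤ η / (8 * C0) := min_le_right _ _
    rw [le_div_iff₀ (by positivity)] at this
    linarith
  set σ := min (1/4) (α / (14 * C0)) with hσd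
  have hα := D.hα
  have hσ : 0 < σ := lt_min (by norm_num) (by positivity)
  have hσ1 : σ ≤ 1 / 4 := min_le_left _ _
  have hσ2 : 14 * σ * C0 ≤ α := by
    have : σ ≤ α / (14 * C0) := min_le_right _ _
    rw [le_div_iff₀ (by positivity)] at this
    linarith
  obtain ⟨M, hM1, hM⟩ := D.Hbdd (4 * b * ρ / κ)
  set C1 := 2 * (|Cb| * ρ) + 2 * M with hC1
  have hC1' : 0 ≤ C1 := by positivity
  set A := (C1 + 4 * C0 + 2 * L + 2 * b * n + 1) / K with hAd
  have hA : 0 ≤ A := by positivity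
  have hKA : K * A = C1 + 4 * C0 + 2 * L + 2 * b * n + 1 := by rw [hAd]; field_simp
  refine ⟨min 1 (η / (2 * (K * A + 1))), lt_min one_pos (by positivity), fun ε hε hε0 u S a ha j y hy => ?_⟩
  have hε1 : ε ≤ 1 := (hε0.trans_le (min_le_left _ _)).le
  have hε2 : ε * (2 * (K * A + 1)) ≤ η := by
    rw [← le_div_iff₀ (by positivity)]; exact (hε0.trans_le (min_le_right _ _)).le
  have hball : ∀ x y : EE n, ‖x - a‖ ≤ ρ → ‖x - y‖ ≤ ρ → x ∈ Metric.ball a (3 * ρ) ∧ y ∈ Metric.ball a (3 * ρ) := by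
    intro x y hx hy
    rw [mem_ball_iff_norm, mem_ball_iff_norm]
    have : ‖y - a‖ ≤ ‖x - a‖ + ‖x - y‖ := by
      rw [show y - a = (x - a) - (x - y) by abel]; exact norm_sub_le _ _
    constructor <;> linarith
  have key := doubling D hε hε1 S hC0 (hC ε hε u S) hρ ha (K := K) (A := A) (b := b) (C1 := C1) hA hb0 hκ hκ1 hσ hσ1 hσ2 h1 h2 h3 hsup ?_ ?_ hL
    (fun j x hx y hy => hψ j a _ ha x hx y hy) hKA.ge j y hy
  · have h5 := phi_le' (t := ‖a - y‖) hK0.le hA hε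
    linarith
  · intro j x y hx hxy
    obtain ⟨hx', hy'⟩ := hball x y hx.le hxy
    have h5 := abs_le.1 (hC ε hε u S j x (ha hx'))
    have h6 := abs_le.1 (hC ε hε u S j y (ha hy'))
    have h7 := phi_ge (t := ‖x - y‖) hK0.le hA hε (norm_nonneg _)
    have h8 : 0 ≤ K * ‖x - y‖ := by positivity
    linarith
  · intro j x y hx hxy _ cX cY hcX hcY p r _ hr
    obtain ⟨hx', hy'⟩ := hball x y hx hxy
    have hδ : κ * σ ≤ κ / 4 := by nlinarith
    have hX := abs_le.1 hcX
    have hY := abs_le.1 hcY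
    have hd : κ / 2 ≤ cY - cX := by linarith
    have hX0 : 0 < cX := by linarith
    have h5 := D.Hscale j (ha hy') hX0 (show cX < cY by linarith) p r (fun q hq => hM j y (ha hy') q hq) (by
      calc ‖r‖ ≤ 2 * b * ρ := hr
        _ = κ / 2 * (4 * b * ρ / κ) := by field_simp; ring
        _ ≤ _ := by gcongr)
    have h6 := abs_le.1 (D.Hlipx j ha (cX⁻¹ • (p + r)) hx' hy')
    have h7 : Cb * ‖x - y‖ ≤ |Cb| * ρ := mul_le_mul (le_abs_self _) hxy (norm_nonneg _) (abs_nonneg _)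
    have h8 : cX * (-(|Cb| * ρ)) ≤ cX * (H j x (cX⁻¹ • (p + r)) - H j y (cX⁻¹ • (p + r))) := by
      gcongr; linarith
    have h9 : cX * (|Cb| * ρ) ≤ 2 * (|Cb| * ρ) := by gcongr; linarith
    have h10 : (cY - cX) * M ≤ 2 * M := by gcongr; linarith
    linarith

end S18

namespace S18
open Topology

variable {n : ℕ} {U : Set (EE n)} {H : Bool → EE n → EE n → ℝ} {ψ Φ : Bool → EE n → ℝ}
    {γ : ℝ → ℝ} {α Cb : ℝ}

set_option maxHeartbeats 2000000 in
theorem pass2 (D : Data U H ψ Φ γ α Cb) {C0 : ℝ} (hC0 : 1 ≤ C0)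
    (hC : ∀ ε > 0, ∀ u, Sol U H ψ γ ε u → ∀ j, ∀ x ∈ closure U, |u j x| ≤ C0)
    {ρ K b0 : ℝ} (hρ : 0 < ρ) (hb0 : b0 * ρ^2 = 2 * C0) (h1 : 8 * b0 * ρ ≤ K) (h2 : 2 * C0 ≤ K * ρ)
    (h3 : C0 + 2 * b0 < K)
    (hsup : ∀ j, ∀ x ∈ closure U, ∀ p : EE n, K / 4 ≤ ‖p‖ → 8 * n * ‖p‖ ≤ H j x p) :
    ∃ P, 0 ≤ P ∧ ∃ ε0 > 0, ∀ ε > 0, ε < ε0 → ∀ u, Sol U H ψ γ ε u → ∀ a, Metric.ball a (4 * ρ) ⊆ closure U →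
      ∀ j, ∀ y, ‖a - y‖ ≤ ρ → u j a - u j y ≤ P * ‖a - y‖ := by
  have hb0p : 0 < b0 := by
    by_contra h
    push Not at h
    have : b0 * ρ^2 ≤ 0 := mul_nonpos_of_nonpos_of_nonneg h (by positivity)
    linarith
  have hK0 : 0 < K := by linarith
  obtain ⟨L, hL, hψ⟩ := D.ψlip
  set σ := min (1/4) (α / (14 * C0)) with hσd
  have hα := D.hα
  have hσ : 0 < σ := lt_min (by norm_num) (by positivity)
  have hσ1 : σ ≤ 1 / 4 := min_le_left _ _
  have hσ2 : 14 * σ * C0 ≤ α := by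
    have : σ ≤ α / (14 * C0) := min_le_right _ _
    rw [le_div_iff₀ (by positivity)] at this
    linarith
  set A := (1 + 4 * C0 + 2 * L + 2 * b0 * n + 1) / K with hAd
  have hA : 0 ≤ A := by positivity
  have hKA : K * A = 1 + 4 * C0 + 2 * L + 2 * b0 * n + 1 := by rw [hAd]; field_simp
  set P := K * (1 + A) with hP
  have hP0 : 0 ≤ P := by positivity
  obtain ⟨M, hM1, hM⟩ := D.Hbdd (2 * P + 2)
  obtain ⟨d, hd, hHu⟩ := D.Hunif (2 * P + 2) (τ := 1 / 4) (by norm_num)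
  set b := min b0 (min (1 / (2 * ρ)) (d / (16 * ρ))) with hbd
  have hb : 0 < b := lt_min hb0p (lt_min (by positivity) (by positivity))
  have hbb0 : b ≤ b0 := min_le_left _ _
  have hbρ : 2 * b * ρ ≤ 1 := by
    have : b ≤ 1 / (2 * ρ) := (min_le_right _ _).trans (min_le_left _ _)
    rw [le_div_iff₀ (by positivity)] at this
    linarith
  have hbd' : 16 * b * ρ ≤ d := by
    have : b ≤ d / (16 * ρ) := (min_le_right _ _).trans (min_le_right _ _)
    rw [le_div_iff₀ (by positivity)] at this
    linarith
  obtain ⟨ε1, hε1, hp1⟩ := pass1 D hC0 hC hρ hb0 h1 h2 h3 hsup (η := b * ρ^2) (by positivity)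
  refine ⟨P, hP0, min (min 1 d) ε1, lt_min (lt_min one_pos hd) hε1, fun ε hε hε0 u S a ha j y hy => ?_⟩
  have hεd : ε < d := hε0.trans_le ((min_le_left _ _).trans (min_le_right _ _))
  have hε1' : ε ≤ 1 := (hε0.trans_le ((min_le_left _ _).trans (min_le_left _ _))).le
  have hp1' := hp1 ε hε (hε0.trans_le (min_le_right _ _)) u S
  have ha3 : Metric.ball a (3 * ρ) ⊆ closure U := (Metric.ball_subset_ball (by linarith)).trans ha
  have hball : ∀ x y : EE n, ‖x - a‖ ≤ ρ → ‖x - y‖ ≤ ρ → x ∈ Metric.ball a (3 * ρ) ∧ y ∈ Metric.ball a (3 * ρ) := by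
    intro x y hx hy
    rw [mem_ball_iff_norm, mem_ball_iff_norm]
    have : ‖y - a‖ ≤ ‖x - a‖ + ‖x - y‖ := by
      rw [show y - a = (x - a) - (x - y) by abel]; exact norm_sub_le _ _
    constructor <;> linarith
  refine le_trans ?_ (phi_le (t := ‖a - y‖) hK0.le hA hε)
  refine le_of_forall_pos_le_add fun e he => ?_
  set κ := min (min 1 (e / (4 * C0))) (min (1 / (8 * M)) (d / (8 * (P + 1)))) with hκd
  have hκ : 0 < κ := lt_min (lt_min one_pos (by positivity)) (lt_min (by positivity) (by positivity))
  have hκ1 : κ ≤ 1 := (min_le_left _ _).trans (min_le_left _ _)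
  have hκ2 : 4 * κ * C0 ≤ e := by
    have : κ ≤ e / (4 * C0) := (min_le_left _ _).trans (min_le_right _ _)
    rw [le_div_iff₀ (by positivity)] at this
    linarith
  have hκM : κ * (8 * M) ≤ 1 := by
    rw [← le_div_iff₀ (by positivity)]; exact (min_le_right _ _).trans (min_le_left _ _)
  have hκP : κ * (8 * (P + 1)) ≤ d := by
    rw [← le_div_iff₀ (by positivity)]; exact (min_le_right _ _).trans (min_le_right _ _)
  have hKA' : 1 + 4 * C0 + 2 * L + 2 * b * n + 1 ≤ K * A := by
    rw [hKA]; gcongr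
  have key := doubling D hε hε1' S hC0 (hC ε hε u S) hρ ha3 (K := K) (A := A) (b := b) (C1 := 1) hA hb.le hκ hκ1 hσ hσ1 hσ2
    (le_trans (by gcongr) h1) h2 (by linarith) hsup ?_ ?_ hL
    (fun j x hx y hy => hψ j a _ ha3 x hx y hy) hKA' j y hy
  · linarith
  · intro j x y hx hxy
    have h5 := hp1' x (by
      refine (Metric.ball_subset_ball' ?_).trans ha
      rw [dist_eq_norm, hx]; linarith) j y hxy
    have h7 := phi_ge (t := ‖x - y‖) hK0.le hA hε (norm_nonneg _)
    linarith
  · intro j x y hx hxy hxyε cX cY hcX hcY p r hpn hr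
    obtain ⟨hx', hy'⟩ := hball x y hx hxy
    have hδ : κ * σ ≤ κ / 4 := by nlinarith
    have hX := abs_le.1 hcX
    have hY := abs_le.1 hcY
    have hX0 : 3 / 4 ≤ cX := by linarith
    have hX2 : cX ≤ 2 := by linarith
    have hY1 : 1 ≤ cY := by linarith
    have hXi : cX⁻¹ ≤ 2 := by rw [inv_le_comm₀ (by linarith) (by norm_num)]; linarith
    have hYi : cY⁻¹ ≤ 1 := inv_le_one_of_one_le₀ hY1
    have hXp : 0 < cX⁻¹ := inv_pos.2 (by linarith)
    have hYp : 0 < cY⁻¹ := inv_pos.2 (by linarith)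
    have hr1 : ‖r‖ ≤ 1 := hr.trans hbρ
    have n1 : ‖cX⁻¹ • (p + r)‖ ≤ 2 * P + 2 := by
      rw [norm_smul, Real.norm_of_nonneg hXp.le]
      calc cX⁻¹ * ‖p + r‖ ≤ 2 * (‖p‖ + ‖r‖) := by gcongr; exact norm_add_le _ _
        _ ≤ 2 * P + 2 := by linarith
    have n2 : ‖cY⁻¹ • p‖ ≤ 2 * P + 2 := by
      rw [norm_smul, Real.norm_of_nonneg hYp.le]
      calc cY⁻¹ * ‖p‖ ≤ 1 * P := by gcongr
        _ ≤ 2 * P + 2 := by linarith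
    have n3 : ‖cX⁻¹ • (p + r) - cY⁻¹ • p‖ < d := by
      have e1 : cX⁻¹ • (p + r) - cY⁻¹ • p = (cX⁻¹ - cY⁻¹) • p + cX⁻¹ • r := by module
      have e2 : cX⁻¹ - cY⁻¹ = (cY - cX) * (cX⁻¹ * cY⁻¹) := by
        have : cX ≠ 0 := by linarith
        have : cY ≠ 0 := by linarith
        field_simp
      have e3 : 0 ≤ cY - cX := by linarith
      have e4 : cX⁻¹ - cY⁻¹ ≤ (2 * κ) * (2 * 1) := by
        rw [e2]; gcongr; linarith
      have e5 : 0 ≤ cX⁻¹ - cY⁻¹ := by rw [e2]; positivity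
      rw [e1]
      calc ‖(cX⁻¹ - cY⁻¹) • p + cX⁻¹ • r‖ ≤ ‖(cX⁻¹ - cY⁻¹) • p‖ + ‖cX⁻¹ • r‖ := norm_add_le _ _
        _ = (cX⁻¹ - cY⁻¹) * ‖p‖ + cX⁻¹ * ‖r‖ := by
            rw [norm_smul, norm_smul, Real.norm_of_nonneg e5, Real.norm_of_nonneg hXp.le]
        _ ≤ ((2 * κ) * (2 * 1)) * P + 2 * (2 * b * ρ) := by gcongr
        _ < d := by linarith
    have hu1 := abs_lt.1 (hHu j x (ha3 hx') y (ha3 hy') _ _ n1 n2 (hxyε.trans_lt hεd) n3)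
    have hm := abs_le.1 (hM j y (ha3 hy') _ n2)
    have g1 : cX * (-(1/4)) ≤ cX * (H j x (cX⁻¹ • (p + r)) - H j y (cY⁻¹ • p)) := by
      gcongr; linarith
    have g2 : (cY - cX) * H j y (cY⁻¹ • p) ≤ (2 * κ) * M := by
      have e3 : 0 ≤ cY - cX := by linarith
      calc (cY - cX) * H j y (cY⁻¹ • p) ≤ (cY - cX) * M := by gcongr; exact hm.2
        _ ≤ _ := by gcongr; linarith
    linarith

theorem grad_bound (D : Data U H ψ Φ γ α Cb) : ∃ P, 0 ≤ P ∧ ∃ ε0 > 0, ∀ ε > 0, ε < ε0 → ∀ u, Sol U H ψ γ ε u →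
    ∀ j, ∀ x ∈ U, ψ j x ≤ u j x - u (!j) x → ∀ k, ‖gradient (u k) x‖ ≤ P := by
  obtain ⟨C0, hC0, hC⟩ := Linf D
  obtain ⟨d0, hd0, ε1, hε1, hcon⟩ := contact D
  set ρ := d0 / 4 with hρd
  have hρ : 0 < ρ := by positivity
  set b0 := 2 * C0 / ρ^2 with hb0d
  have hb0 : b0 * ρ^2 = 2 * C0 := by rw [hb0d]; field_simp
  have hb0p : 0 < b0 := by positivity
  have hR : ∃ R, ∀ j, ∀ x ∈ closure U, ∀ p : EE n, R ≤ ‖p‖ → 8 * n * ‖p‖ ≤ H j x p := by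
    obtain ⟨R1, h1⟩ := D.suplin true (8 * n)
    obtain ⟨R2, h2⟩ := D.suplin false (8 * n)
    refine ⟨max R1 R2, fun j x hx p hp => ?_⟩
    cases j
    · exact h2 x hx p ((le_max_right _ _).trans hp)
    · exact h1 x hx p ((le_max_left _ _).trans hp)
  obtain ⟨R, hR⟩ := hR
  set K := 8 * b0 * ρ + 2 * C0 / ρ + (C0 + 2 * b0 + 1) + 4 * |R| with hK
  have p1 : 0 ≤ 8 * b0 * ρ := by positivity
  have p2 : 0 ≤ 2 * C0 / ρ := by positivity
  have p3 : R ≤ |R| := le_abs_self R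
  have p4 : 0 ≤ |R| := abs_nonneg R
  obtain ⟨P, hP, ε2, hε2, hp2⟩ := pass2 D hC0 hC hρ (K := K) hb0 (by linarith) (by
    rw [← div_le_iff₀ hρ]; linarith) (by linarith) (fun j x hx p hp => hR j x hx p (by linarith))
  refine ⟨P, hP, min ε1 ε2, lt_min hε1 hε2, fun ε hε hε0 u S j x hx hθ k => ?_⟩
  have hball := hcon ε hε (hε0.trans_le (min_le_left _ _)) u S j x (subset_closure hx) hθ
  have hl := hp2 ε hε (hε0.trans_le (min_le_right _ _)) u S x (by rwa [show 4 * ρ = d0 by rw [hρd]; ring]) k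
  have hdiff : DifferentiableAt ℝ (u k) x :=
    ((S.c2 k).differentiableOn (by norm_num)).differentiableAt (D.hU.mem_nhds hx)
  set g := gradient (u k) x with hg
  by_contra hcn
  push Not at hcn
  have hg0 : 0 < ‖g‖ := by linarith
  have hgr := hdiff.hasGradientAt
  have hline : HasDerivAt (fun t : ℝ => u k (x + t • (-g))) (inner ℝ g (-g)) 0 := by
    have h1 : HasDerivAt (fun t : ℝ => x + t • (-g)) (-g) 0 := by
      simpa using ((hasDerivAt_id (0:ℝ)).smul_const (-g)).const_add x
    have h2 : HasFDerivAt (u k) (InnerProductSpace.toDual ℝ (EE n) g) (x + (0:ℝ) • (-g)) := by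
      rw [zero_smul, add_zero]; exact hgr.hasFDerivAt
    exact h2.comp_hasDerivAt 0 h1
  have hsl : HasDerivAt (fun t : ℝ => u k (x + t • (-g)) + P * ‖g‖ * t) (inner ℝ g (-g) + P * ‖g‖) 0 := by
    refine (hline.add ((hasDerivAt_id (0:ℝ)).const_mul (P * ‖g‖))).congr_deriv ?_
    rw [mul_one]
  have hneg : inner ℝ g (-g) + P * ‖g‖ < 0 := by
    rw [inner_neg_right, real_inner_self_eq_norm_sq]; nlinarith
  have hev := (hsl.tendsto_slope.eventually_lt_const hneg)
  have hev2 : ∀ᶠ t : ℝ in 𝓝[>] 0, slope (fun t : ℝ => u k (x + t • (-g)) + P * ‖g‖ * t) 0 t < 0 :=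
    hev.filter_mono (nhdsWithin_mono _ (fun t ht => ne_of_gt ht))
  have hev3 : ∀ᶠ t : ℝ in 𝓝[>] 0, t * ‖g‖ < ρ := nhdsWithin_le_nhds
    ((show Continuous (fun t : ℝ => t * ‖g‖) by fun_prop).continuousAt.eventually_lt continuousAt_const (by simpa using hρ))
  obtain ⟨t, h5, h6, h7⟩ := (hev2.and (hev3.and self_mem_nhdsWithin)).exists
  have ht : 0 < t := h7
  rw [slope_def_field, div_neg_iff] at h5
  have hn : ‖x - (x + t • (-g))‖ = t * ‖g‖ := by
    rw [show x - (x + t • (-g)) = t • g by module, norm_smul, Real.norm_of_nonneg ht.le]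
  have h8 := hl (x + t • (-g)) (by rw [hn]; exact h6.le)
  rw [hn] at h8
  simp only [zero_smul, add_zero, mul_zero, sub_zero] at h5
  rcases h5 with h5 | h5
  · linarith
  · linarith

end S18

namespace S18
open Topology

variable {n : ℕ} {U : Set (EE n)} {H : Bool → EE n → EE n → ℝ} {ψ Φ : Bool → EE n → ℝ}
    {γ : ℝ → ℝ} {α Cb : ℝ}

theorem final (D : Data U H ψ Φ γ α Cb) : ∃ C > (0:ℝ), ∃ ε₀ ∈ Set.Ioc (0:ℝ) 1, ∀ ε ∈ Set.Ioo (0:ℝ) ε₀,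
    ∀ u, Sol U H ψ γ ε u → ∀ j, ∀ x ∈ closure U, (u j x - u (!j) x - ψ j x) / ε ≤ C ∧
      γ ((u j x - u (!j) x - ψ j x) / ε) ≤ C := by
  obtain ⟨C0, hC0, hC⟩ := Linf D
  obtain ⟨P, hP, ε1, hε1, hg⟩ := grad_bound D
  obtain ⟨M, hM1, hM⟩ := D.Hbdd P
  have hψ2 : ∀ j (s : Set (EE n)), ContDiffOn ℝ 2 (ψ j) s := fun j s =>
    (contDiff_infty.1 (D.hψ j) 2).contDiffOn
  obtain ⟨L, hL1, hL⟩ := bound_bool D.cpt (f := fun j x => lap (ψ j) x)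
    (fun j => (continuousOn_lap isOpen_univ (hψ2 j univ)).mono (subset_univ _))
  set C2 := L + 2 * M + 2 * C0 with hC2
  obtain ⟨s, hs⟩ := (D.γtop.eventually_gt_atTop C2).exists
  refine ⟨max (max C2 s) 1, by positivity, min 1 ε1, ⟨lt_min one_pos hε1, min_le_left _ _⟩, ?_⟩
  intro ε ⟨hε, hε0⟩ u S j x hx
  have hεle : ε ≤ 1 := (hε0.trans_le (min_le_left _ _)).le
  have hg' := hg ε hε (hε0.trans_le (min_le_right _ _)) u S
  suffices hkey : γ ((u j x - u (!j) x - ψ j x) / ε) ≤ C2 by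
    refine ⟨?_, hkey.trans ((le_max_left _ _).trans (le_max_left _ _))⟩
    refine le_trans ?_ ((le_max_right _ _).trans (le_max_left _ _))
    by_contra h
    push Not at h
    exact absurd (D.mono h.le) (by linarith)
  have hu := hC ε hε u S
  obtain ⟨k, x0, hx0, hmax⟩ := exists_max_bool D.cpt ⟨x, hx⟩ (F := fun j x => u j x - u (!j) x - ψ j x)
    (fun j => ((S.cont j).sub (S.cont (!j))).sub (D.hψ j).continuous.continuousOn)
  have h1 : γ ((u j x - u (!j) x - ψ j x) / ε) ≤ γ ((u k x0 - u (!k) x0 - ψ k x0) / ε) :=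
    D.mono (by have := hmax j x hx; gcongr)
  refine h1.trans ?_
  rcases le_or_gt (u k x0 - u (!k) x0 - ψ k x0) 0 with h0 | h0
  · rw [D.γ0 _ (div_nonpos_of_nonpos_of_nonneg h0 hε.le)]; positivity
  have hα := D.hα
  have hψk := D.ψα k x0 hx0
  have hψk' := D.ψα (!k) x0 hx0
  have hxU : x0 ∈ U := by
    by_contra hn
    have hf := mem_frontier_of D.hU hx0 hn
    rw [S.bdry k x0 hf, S.bdry (!k) x0 hf] at h0
    linarith
  have hgr := hg' k x0 hxU (by linarith)
  have h3 := (max_three D.hU (S.c2 k) (S.c2 (!k)) (hψ2 k U) hxU (fun y hy => hmax k y (subset_closure hy))).2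
  have e1 := S.pde k x0 hxU
  have e2 := S.pde (!k) x0 hxU
  rw [Bool.not_not, D.γ0 _ (div_nonpos_of_nonpos_of_nonneg (by linarith) hε.le)] at e2
  have b1 := abs_le.1 (hM k x0 hx0 _ (hgr k))
  have b2 := abs_le.1 (hM (!k) x0 hx0 _ (hgr (!k)))
  have b3 := abs_le.1 (hu k x0 hx0)
  have b4 := abs_le.1 (hu (!k) x0 hx0)
  have b5 := (abs_le.1 (hL k x0 hx0)).2
  have b6 : ε * (lap (u k) x0 - lap (u (!k)) x0) ≤ 1 * L := by
    calc ε * (lap (u k) x0 - lap (u (!k)) x0) ≤ ε * L := by gcongr; linarith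
      _ ≤ 1 * L := by gcongr
  linarith

end S18

theorem stmt_18
    {n : ℕ} (hn : 2 ≤ n)
    (U : Set (EuclideanSpace ℝ (Fin n))) (hUo : IsOpen U) (hUb : Bornology.IsBounded U)
    (H₁ H₂ : EuclideanSpace ℝ (Fin n) → EuclideanSpace ℝ (Fin n) → ℝ)
    (hH₁ : ContDiff ℝ (⊤ : ℕ∞) (fun q : EuclideanSpace ℝ (Fin n) × EuclideanSpace ℝ (Fin n) => H₁ q.1 q.2))
    (hH₂ : ContDiff ℝ (⊤ : ℕ∞) (fun q : EuclideanSpace ℝ (Fin n) × EuclideanSpace ℝ (Fin n) => H₂ q.1 q.2))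
    (ψ₁ ψ₂ : EuclideanSpace ℝ (Fin n) → ℝ) (hψ₁ : ContDiff ℝ (⊤ : ℕ∞) ψ₁) (hψ₂ : ContDiff ℝ (⊤ : ℕ∞) ψ₂)
    (α : ℝ) (hα : 0 < α)
    (hψ₁α : ∀ x ∈ closure U, α ≤ ψ₁ x) (hψ₂α : ∀ x ∈ closure U, α ≤ ψ₂ x)
    (γ : ℝ → ℝ) (hγ : ContDiff ℝ (⊤ : ℕ∞) γ) (hγconv : ConvexOn ℝ Set.univ γ)
    (hγnn : ∀ s, 0 ≤ γ s)
    (hγ0 : ∀ s ≤ (0:ℝ), γ s = 0) (hγpos : ∀ s, 0 < s → 0 < γ s)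
    (hγ' : ∀ s, 0 < s → 0 < deriv γ s ∧ deriv γ s ≤ 1)
    (hγtop : Tendsto γ atTop atTop)
    -- (H5.1): convexity in p
    (h51a : ∀ x ∈ closure U, ConvexOn ℝ Set.univ (fun p : EuclideanSpace ℝ (Fin n) => H₁ x p))
    (h51b : ∀ x ∈ closure U, ConvexOn ℝ Set.univ (fun p : EuclideanSpace ℝ (Fin n) => H₂ x p))
    -- (H5.2): uniform superlinearity
    (h52a : ∀ M : ℝ, ∃ R : ℝ, ∀ x ∈ closure U, ∀ p : EuclideanSpace ℝ (Fin n), R ≤ ‖p‖ → M * ‖p‖ ≤ H₁ x p)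
    (h52b : ∀ M : ℝ, ∃ R : ℝ, ∀ x ∈ closure U, ∀ p : EuclideanSpace ℝ (Fin n), R ≤ ‖p‖ → M * ‖p‖ ≤ H₂ x p)
    -- (H5.3): bounded D_xH
    (Cb : ℝ)
    (h53a : ∀ x ∈ closure U, ∀ p : EuclideanSpace ℝ (Fin n), ‖gradient (fun y => H₁ y p) x‖ ≤ Cb)
    (h53b : ∀ x ∈ closure U, ∀ p : EuclideanSpace ℝ (Fin n), ‖gradient (fun y => H₂ y p) x‖ ≤ Cb)
    -- (H5.4): strict smooth subsolutions compatible with the obstacles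
    (Φ₁ Φ₂ : EuclideanSpace ℝ (Fin n) → ℝ)
    (hΦ₁2 : ContDiffOn ℝ 2 Φ₁ U) (hΦ₁c : ContinuousOn Φ₁ (closure U))
    (hΦ₁c1 : ContinuousOn (gradient Φ₁) (closure U))
    (hΦ₂2 : ContDiffOn ℝ 2 Φ₂ U) (hΦ₂c : ContinuousOn Φ₂ (closure U))
    (hΦ₂c1 : ContinuousOn (gradient Φ₂) (closure U))
    (hΦ₁0 : ∀ x ∈ frontier U, Φ₁ x = 0) (hΦ₂0 : ∀ x ∈ frontier U, Φ₂ x = 0)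
    (hΦobst : ∀ x ∈ closure U, -ψ₂ x ≤ Φ₁ x - Φ₂ x ∧ Φ₁ x - Φ₂ x ≤ ψ₁ x)
    (hΦsub₁ : ∀ x ∈ closure U, Φ₁ x + H₁ x (gradient Φ₁ x) < 0)
    (hΦsub₂ : ∀ x ∈ closure U, Φ₂ x + H₂ x (gradient Φ₂ x) < 0)
 :
    ∃ C > (0:ℝ), ∃ ε₀ ∈ Set.Ioc (0:ℝ) 1, ∀ ε ∈ Set.Ioo (0:ℝ) ε₀,
      ∀ u₁ u₂ : EuclideanSpace ℝ (Fin n) → ℝ,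
        ContDiffOn ℝ 2 u₁ U → ContinuousOn u₁ (closure U) →
        ContinuousOn (gradient u₁) (closure U) →
        ContDiffOn ℝ 2 u₂ U → ContinuousOn u₂ (closure U) →
        ContinuousOn (gradient u₂) (closure U) →
        (∀ x ∈ U, u₁ x + H₁ x (gradient u₁ x) + γ ((u₁ x - u₂ x - ψ₁ x) / ε) = ε * lap u₁ x) →
        (∀ x ∈ U, u₂ x + H₂ x (gradient u₂ x) + γ ((u₂ x - u₁ x - ψ₂ x) / ε) = ε * lap u₂ x) →
        (∀ x ∈ frontier U, u₁ x = 0) → (∀ x ∈ frontier U, u₂ x = 0) →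
        ∀ x ∈ closure U,
          (u₁ x - u₂ x - ψ₁ x) / ε ≤ C ∧ (u₂ x - u₁ x - ψ₂ x) / ε ≤ C ∧
          γ ((u₁ x - u₂ x - ψ₁ x) / ε) ≤ C ∧ γ ((u₂ x - u₁ x - ψ₂ x) / ε) ≤ C := by
  have D : S18.Data U (fun j => cond j H₁ H₂) (fun j => cond j ψ₁ ψ₂) (fun j => cond j Φ₁ Φ₂) γ α Cb :=
    { hn := hn
      hU := hUo
      bdd := hUb
      hH := fun j => by cases j <;> assumption
      hψ := fun j => by cases j <;> assumption
      hα := hα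
      ψα := fun j => by cases j <;> assumption
      hγ := hγ
      γconv := hγconv
      γnn := hγnn
      γ0 := hγ0
      γ' := hγ'
      γtop := hγtop
      conv := fun j => by cases j <;> assumption
      suplin := fun j => by cases j <;> assumption
      dx := fun j => by cases j <;> assumption
      Φ2 := fun j => by cases j <;> assumption
      Φc := fun j => by cases j <;> assumption
      Φg := fun j => by cases j <;> assumption
      Φ0 := fun j => by cases j <;> assumption
      obst := fun j x hx => by
        have h := hΦobst x hx
        cases j
        · change Φ₂ x - Φ₁ x ≤ ψ₂ x
          linarith [h.1]
        · exact h.2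
      sub := fun j => by cases j <;> assumption }
  obtain ⟨C, hC, ε₀, hε₀, h⟩ := S18.final D
  refine ⟨C, hC, ε₀, hε₀, ?_⟩
  intro ε hε u₁ u₂ a1 a2 a3 b1 b2 b3 p1 p2 z1 z2 x hx
  have S : S18.Sol U (fun j => cond j H₁ H₂) (fun j => cond j ψ₁ ψ₂) γ ε (fun j => cond j u₁ u₂) :=
    { c2 := fun j => by cases j <;> assumption
      cont := fun j => by cases j <;> assumption
      grad := fun j => by cases j <;> assumption
      pde := fun j => by cases j <;> assumption
      bdry := fun j => by cases j <;> assumption }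
  have h1 := h ε hε _ S true x hx
  have h2 := h ε hε _ S false x hx
  exact ⟨h1.1, h2.1, h1.2, h2.2⟩
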